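/- arXiv:2102.00803 — 8 statements merged into one kernel-verified Lean document; each statement's English description precedes it below -/
import Mathlib

section
/- Let F ⊆ ℤ² be a finite nonempty set and let ℓ be a line through the origin of ℝ² with ℓ ∉ dir(F). Then there exists v ∈ ℤ² such that F ∩ (v + F) = ∅ and ℓ ∉ dir(F ∪ (v + F)). -/
/-!
Two lattice points lie on a common translate of `ℓ` exactly when they have the same image in the
quotient `ℝ² ⧸ ℓ`, so `ℓ ∈ dir(S)` means that no point of `S` is alone in its fibre. The lattice
spans `ℝ²`, hence its image in this torsion-free quotient is infinite, and `v` can be chosen so that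
the images of `F` and `v + F` are disjoint. The fibres that meet `F` then contain no point of
`v + F`, so a point of `F` that is alone in its fibre remains alone in `F ∪ (v + F)`.
-/

noncomputable section

/-- The embedding of the integer lattice into the plane. -/
def toR (p : ℤ × ℤ) : ℝ × ℝ := ((p.1 : ℝ), (p.2 : ℝ))

/-- A line through the origin of `ℝ²`: the span of a nonzero vector. -/
def IsLine (ℓ : Submodule ℝ (ℝ × ℝ)) : Prop :=
  ∃ w : ℝ × ℝ, w ≠ 0 ∧ ℓ = Submodule.span ℝ {w}

/-- The direction set of `S ⊆ ℤ²`: lines `ℓ` through the origin such that every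
translate of `ℓ` that meets `S` meets it in at least two points. -/
def dirSet (S : Set (ℤ × ℤ)) : Set (Submodule ℝ (ℝ × ℝ)) :=
  {ℓ | IsLine ℓ ∧ ∀ a : ℝ × ℝ, (∃ s ∈ S, toR s - a ∈ ℓ) →
      ∃ s ∈ S, ∃ t ∈ S, s ≠ t ∧ toR s - a ∈ ℓ ∧ toR t - a ∈ ℓ}

section AddGroup

variable {G Q : Type*} [AddGroup G] [AddGroup Q]

lemma infinite_range_of_ne_zero [IsAddTorsionFree Q] {φ : G →+ Q} (hφ : φ ≠ 0) :
    (Set.range φ).Infinite := by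
  obtain ⟨u, hu⟩ := DFunLike.ne_iff.1 hφ
  have hmultiples : (AddSubgroup.zmultiples (φ u) : Set Q).Infinite :=
    infinite_zmultiples.2 (not_isOfFinAddOrder_of_isAddTorsionFree hu)
  exact hmultiples.mono (AddSubgroup.zmultiples_le_of_mem (H := φ.range) ⟨u, rfl⟩)

lemma exists_disjoint_image_image_add_left {φ : G →+ Q} (hφ : (Set.range φ).Infinite)
    {S T : Set G} (hS : S.Finite) (hT : T.Finite) :
    ∃ v : G, Disjoint (φ '' S) (φ '' ((fun a => v + a) '' T)) := by
  have hdiff : (Set.image2 (fun s t => φ s - φ t) S T).Finite := hS.image2 _ hT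
  obtain ⟨_, ⟨v, rfl⟩, hv⟩ := hφ.exists_notMem_finite hdiff
  refine ⟨v, Set.disjoint_left.2 ?_⟩
  rintro _ ⟨s, hs, rfl⟩ ⟨_, ⟨t, ht, rfl⟩, hst⟩
  refine hv ⟨s, hs, t, ht, sub_eq_of_eq_add ?_⟩
  rw [← hst, map_add]

end AddGroup

lemma IsLine.ne_top {ℓ : Submodule ℝ (ℝ × ℝ)} (hℓ : IsLine ℓ) : ℓ ≠ ⊤ := by
  obtain ⟨w, -, rfl⟩ := hℓ
  exact (span_lt_top_of_card_lt_finrank (by simp)).ne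

section LatticeProj

variable {ℓ : Submodule ℝ (ℝ × ℝ)} {p q : ℤ × ℤ} {S T : Set (ℤ × ℤ)}

/-- The projection `ℤ² → ℝ² ⧸ ℓ` along `ℓ`, whose nonempty fibres are the intersections of `ℤ²`
with the translates of `ℓ` that meet it. -/
def latticeProj (ℓ : Submodule ℝ (ℝ × ℝ)) : ℤ × ℤ →+ (ℝ × ℝ) ⧸ ℓ :=
  ℓ.mkQ.toAddMonoidHom.comp ((Int.castAddHom ℝ).prodMap (Int.castAddHom ℝ))

lemma latticeProj_eq_zero_iff : latticeProj ℓ p = 0 ↔ toR p ∈ ℓ :=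
  Submodule.Quotient.mk_eq_zero ℓ

lemma latticeProj_eq_iff : latticeProj ℓ p = latticeProj ℓ q ↔ toR p - toR q ∈ ℓ :=
  Submodule.Quotient.eq ℓ

lemma latticeProj_ne_zero (hℓ : ℓ ≠ ⊤) : latticeProj ℓ ≠ 0 := by
  refine fun hzero => hℓ (Submodule.eq_top_iff'.2 fun x => ?_)
  have hmem (p : ℤ × ℤ) : toR p ∈ ℓ := latticeProj_eq_zero_iff.1 (DFunLike.congr_fun hzero p)
  have hx : x = x.1 • toR (1, 0) + x.2 • toR (0, 1) := by ext <;> simp [toR]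
  rw [hx]
  exact ℓ.add_mem (ℓ.smul_mem _ (hmem _)) (ℓ.smul_mem _ (hmem _))

lemma infinite_range_latticeProj (hℓ : ℓ ≠ ⊤) : (Set.range (latticeProj ℓ)).Infinite :=
  have : IsAddTorsionFree ((ℝ × ℝ) ⧸ ℓ) := .of_isTorsionFree ℝ _
  infinite_range_of_ne_zero (latticeProj_ne_zero hℓ)

lemma mem_dirSet_iff : ℓ ∈ dirSet S ↔
    IsLine ℓ ∧ ∀ s ∈ S, ∃ t ∈ S, t ≠ s ∧ latticeProj ℓ t = latticeProj ℓ s := by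
  refine and_congr_right fun _ => ⟨fun h s hs => ?_, fun h a ⟨s, hs, hsa⟩ => ?_⟩
  · obtain ⟨p, hp, q, hq, hpq, hps, hqs⟩ := h (toR s) ⟨s, hs, by simp⟩
    rcases eq_or_ne p s with rfl | hne
    · exact ⟨q, hq, hpq.symm, latticeProj_eq_iff.2 hqs⟩
    · exact ⟨p, hp, hne, latticeProj_eq_iff.2 hps⟩
  · obtain ⟨t, ht, hts, heq⟩ := h s hs
    refine ⟨s, hs, t, ht, hts.symm, hsa, ?_⟩
    simpa using ℓ.add_mem (latticeProj_eq_iff.1 heq) hsa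

lemma mem_dirSet_of_mem_dirSet_union (hST : Disjoint (latticeProj ℓ '' S) (latticeProj ℓ '' T))
    (h : ℓ ∈ dirSet (S ∪ T)) : ℓ ∈ dirSet S := by
  obtain ⟨hℓ, hunion⟩ := mem_dirSet_iff.1 h
  refine mem_dirSet_iff.2 ⟨hℓ, fun s hs => ?_⟩
  obtain ⟨t, ht | ht, hts, heq⟩ := hunion s (Or.inl hs)
  · exact ⟨t, ht, hts, heq⟩
  · exact absurd heq.symm (hST.ne_of_mem ⟨s, hs, rfl⟩ ⟨t, ht, rfl⟩)

end LatticeProj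

/-- If `F ⊆ ℤ²` is finite and nonempty and `ℓ` is a line through the
origin with `ℓ ∉ dir(F)`, then there is `v ∈ ℤ²` with `F ∩ (v + F) = ∅` and
`ℓ ∉ dir(F ∪ (v + F))`. -/
theorem stmt2 (F : Set (ℤ × ℤ)) (hfin : F.Finite) (hne : F.Nonempty)
    (ℓ : Submodule ℝ (ℝ × ℝ)) (hℓ : IsLine ℓ) (h : ℓ ∉ dirSet F) :
    ∃ v : ℤ × ℤ, F ∩ ((fun a => v + a) '' F) = ∅ ∧
      ℓ ∉ dirSet (F ∪ (fun a => v + a) '' F) := by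
  obtain ⟨v, hv⟩ :=
    exists_disjoint_image_image_add_left (infinite_range_latticeProj hℓ.ne_top) hfin hfin
  exact ⟨v, hv.of_image.inter_eq, fun hdir => h (mem_dirSet_of_mem_dirSet_union hv hdir)⟩
end
end

section
/- Let F ⊆ ℤ² be an exact cluster whose direction set dir(F) contains at most one line. Then every F-tiling T is 1-periodic, i.e., there exists a nonzero g ∈ ℤ² with T + g = T. -/
/-!
Let the group ring `ℤ[ℤ²]` act on functions `ℤ² → ℤ` by translations. A tiling by `F` is a bounded
function `c` which `∑ f ∈ F, X ^ f` maps to a constant. The Frobenius congruence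
`(∑ f, X ^ f) ^ p ≡ ∑ f, X ^ (p f)` modulo a large prime `p`, together with boundedness, shows that
`∑ f, X ^ (p f)` maps `c` to the same constant, and hence so does `∑ f, X ^ (n f)` for every `n ≡ 1`
modulo a suitable `q`. Eliminating all terms but one from these relations, as in a Vandermonde
system, shows for each `f₀ ∈ F` that `∏ f ≠ f₀, (1 - X ^ (q (f - f₀)))` maps `c` to a constant.

If `φ` is bounded and `(1 - X ^ w) • φ` has a nonzero multiple `n u` of `u` as a period, then
`(1 - X ^ (n u)) • φ` is `w`-periodic. If this always forces a period along `u`, then `φ`, being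
bounded, has one too. So the factors of the above product can be removed one at a time, provided
every `w`-periodic `ℤ[ℤ²]`-multiple `ψ` of `c` has a period along `u`. Here `u` is chosen to span
the only line of `dir(F)`. When `w` is parallel to `u` there is nothing to do. Otherwise some
`f₁ ∈ F` is alone on its line in direction `w`, all factors of the product at `f₁` are transversal
to `w`, and they can be removed from `ψ` in the same way, since a function with two independent
periods has a period along every vector.
-/

noncomputable section

/-- `T` is a tiling of `ℤ²` by translates of the cluster `F`. -/
def IsTiling (F : Finset (ℤ × ℤ)) (T : Set (ℤ × ℤ)) : Prop :=
  ∀ p : ℤ × ℤ, ∃! tv : (ℤ × ℤ) × (ℤ × ℤ), tv.1 ∈ T ∧ tv.2 ∈ F ∧ p = tv.1 + tv.2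

open AddMonoidAlgebra Function

/-- The action of the group ring `ℤ[G]` on integer-valued functions on `G`, in which the monomial
`X ^ v` translates the graph of a function by `v`, so that `(X ^ v • φ) x = φ (x - v)`. -/
def translationHom (G : Type*) [AddCommGroup G] : ℤ[G] →ₐ[ℤ] Module.End ℤ (G → ℤ) :=
  AddMonoidAlgebra.lift ℤ _ G
    { toFun := fun v => LinearMap.funLeft ℤ ℤ (· - v.toAdd)
      map_one' := by ext; simp [LinearMap.funLeft]
      map_mul' := fun v w => by
        ext φ x
        simp [LinearMap.funLeft_apply, sub_sub] }

/-- The `ℤ[G]`-module of integer-valued functions on `G`, under translations. -/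
local instance translationModule {G : Type*} [AddCommGroup G] : Module ℤ[G] (G → ℤ) :=
  Module.compHom _ (translationHom G).toRingHom

section GroupRing

variable {G ι : Type*} [AddCommGroup G]

lemma single_smul_apply (v : G) (φ : G → ℤ) (x : G) :
    ((single v 1 : ℤ[G]) • φ) x = φ (x - v) := by
  change translationHom G (single v 1) φ x = _
  simp [translationHom, LinearMap.funLeft_apply]

lemma sum_single_smul_apply (s : Finset ι) (v : ι → G) (φ : G → ℤ) (x : G) :
    ((∑ i ∈ s, single (v i) 1 : ℤ[G]) • φ) x = ∑ i ∈ s, φ (x - v i) := by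
  simp only [Finset.sum_smul, Finset.sum_apply, single_smul_apply]

/-- The difference operator `1 - X ^ v`, whose kernel consists of the `v`-periodic functions. -/
def diffOp (v : G) : ℤ[G] := 1 - single v 1

lemma diffOp_smul_apply (v : G) (φ : G → ℤ) (x : G) : (diffOp v • φ) x = φ x - φ (x - v) := by
  rw [diffOp, sub_smul, one_smul, Pi.sub_apply, single_smul_apply]

lemma diffOp_smul_eq_zero_iff {v : G} {φ : G → ℤ} : diffOp v • φ = 0 ↔ Periodic φ v := by
  simp only [funext_iff, diffOp_smul_apply, Pi.zero_apply, sub_eq_zero]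
  exact ⟨fun h x => by simpa using h (x + v), fun h x => (h.sub_eq x).symm⟩

lemma periodic_smul {v : G} {φ : G → ℤ} (hφ : Periodic φ v) (P : ℤ[G]) : Periodic (P • φ) v := by
  rw [← diffOp_smul_eq_zero_iff] at hφ ⊢
  rw [smul_comm, hφ, smul_zero]

lemma periodic_diffOp_smul_comm {v w : G} {φ : G → ℤ} :
    Periodic (diffOp v • φ) w ↔ Periodic (diffOp w • φ) v := by
  rw [← diffOp_smul_eq_zero_iff, ← diffOp_smul_eq_zero_iff, smul_comm]

/-- The `ℤ[G]`-submodule of bounded functions. -/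
def boundedFunctions (G : Type*) [AddCommGroup G] : Submodule ℤ[G] (G → ℤ) where
  carrier := {φ | ∃ B, ∀ x, |φ x| ≤ B}
  zero_mem' := ⟨0, by simp⟩
  add_mem' := by
    rintro φ ψ ⟨A, hA⟩ ⟨B, hB⟩
    exact ⟨A + B, fun x => (abs_add_le _ _).trans (add_le_add (hA x) (hB x))⟩
  smul_mem' := by
    rintro P φ ⟨B, hB⟩
    induction P using AddMonoidAlgebra.induction_on with
    | of v => exact ⟨B, fun x => (congrArg abs (single_smul_apply v φ x)).trans_le (hB _)⟩
    | add P Q hP hQ =>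
      obtain ⟨⟨A, hA⟩, ⟨C, hC⟩⟩ := hP, hQ
      refine ⟨A + C, fun x => ?_⟩
      rw [add_smul]
      exact (abs_add_le _ _).trans (add_le_add (hA x) (hC x))
    | smul r P hP =>
      obtain ⟨A, hA⟩ := hP
      refine ⟨|r| * A, fun x => ?_⟩
      rw [smul_assoc, Pi.smul_apply, smul_eq_mul, abs_mul]
      exact mul_le_mul_of_nonneg_left (hA x) (abs_nonneg r)

lemma apply_sub_nsmul_of_periodic_diffOp_smul {w : G} {φ : G → ℤ} (h : Periodic (diffOp w • φ) w)
    (n : ℕ) (x : G) : φ (x - n • w) = φ x - n * (diffOp w • φ) x := by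
  induction n with
  | zero => simp
  | succ n ih =>
    have hstep := h.sub_nsmul_eq (x := x) n
    rw [diffOp_smul_apply w φ (x - n • w), sub_sub, ← succ_nsmul, ih] at hstep
    push_cast
    linarith

lemma periodic_of_periodic_diffOp_smul {w : G} {φ : G → ℤ} (hφ : φ ∈ boundedFunctions G)
    (h : Periodic (diffOp w • φ) w) : Periodic φ w := by
  obtain ⟨B, hB⟩ := hφ
  rw [← diffOp_smul_eq_zero_iff]
  funext x
  by_contra hne
  obtain ⟨n, hn⟩ := exists_nat_gt (2 * B)
  have hle : n * |(diffOp w • φ) x| ≤ 2 * B :=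
    calc n * |(diffOp w • φ) x| = |φ x - φ (x - n • w)| := by
          rw [apply_sub_nsmul_of_periodic_diffOp_smul h, sub_sub_cancel, abs_mul, Nat.abs_cast]
      _ ≤ |φ x| + |φ (x - n • w)| := abs_sub _ _
      _ ≤ 2 * B := by linarith [hB x, hB (x - n • w)]
  have hpos : 1 ≤ |(diffOp w • φ) x| := Int.one_le_abs hne
  nlinarith

end GroupRing

section Dilation

variable {G ι : Type*} [AddCommGroup G]

lemma exists_sum_pow_prime_eq {R : Type*} [CommRing R] {p : ℕ} (hp : p.Prime) (s : Finset ι)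
    (a : ι → R) : ∃ r, (∑ i ∈ s, a i) ^ p = ∑ i ∈ s, a i ^ p + p * r := by
  induction s using Finset.cons_induction with
  | empty => exact ⟨0, by simp [hp.ne_zero]⟩
  | cons i s hi ih =>
    obtain ⟨r, hr⟩ := ih
    obtain ⟨t, ht⟩ := exists_add_pow_prime_eq hp (a i) (∑ i ∈ s, a i)
    refine ⟨r + a i * (∑ i ∈ s, a i) * t, ?_⟩
    rw [Finset.sum_cons, Finset.sum_cons, ht, hr]
    ring

lemma sum_single_pow_succ_smul_eq_const {s : Finset ι} {v : ι → G} {φ : G → ℤ} {k : ℤ}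
    (h : (∑ i ∈ s, single (v i) 1 : ℤ[G]) • φ = const G k) (n : ℕ) :
    (∑ i ∈ s, single (v i) 1 : ℤ[G]) ^ (n + 1) • φ = const G (s.card ^ n * k) := by
  induction n with
  | zero => simpa using h
  | succ n ih =>
    rw [pow_succ', mul_smul, ih]
    funext x
    simp [sum_single_smul_apply, pow_succ', mul_assoc]

lemma prime_dvd_sum_single_nsmul_smul_sub {s : Finset ι} {v : ι → G} {φ : G → ℤ} {k : ℤ}
    (h : (∑ i ∈ s, single (v i) 1 : ℤ[G]) • φ = const G k) {p : ℕ} (hp : p.Prime)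
    (hps : s.card.Coprime p) (x : G) :
    (p : ℤ) ∣ ((∑ i ∈ s, single (p • v i) 1 : ℤ[G]) • φ) x - k := by
  obtain ⟨r, hr⟩ := exists_sum_pow_prime_eq hp s fun i => (single (v i) 1 : ℤ[G])
  have hfrob : s.card ^ (p - 1) * k
      = ((∑ i ∈ s, single (p • v i) 1 : ℤ[G]) • φ) x + p * (r • φ) x := by
    have hpow := congrFun (sum_single_pow_succ_smul_eq_const h (p - 1)) x
    rw [Nat.sub_add_cancel hp.one_le, hr, add_smul, mul_smul, Nat.cast_smul_eq_nsmul] at hpow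
    simpa [single_pow] using hpow.symm
  have hfermat : (p : ℤ) ∣ s.card ^ (p - 1) - 1 :=
    (Int.ModEq.pow_card_sub_one_eq_one hp (Nat.isCoprime_iff_coprime.2 hps)).symm.dvd
  have hsplit : ((∑ i ∈ s, single (p • v i) 1 : ℤ[G]) • φ) x - k
      = (s.card ^ (p - 1) - 1) * k - p * (r • φ) x := by linarith
  rw [hsplit]
  exact dvd_sub (hfermat.mul_right k) (dvd_mul_right _ _)

lemma abs_sum_single_smul_apply_le {φ : G → ℤ} {B : ℤ} (hB : ∀ x, |φ x| ≤ B) (s : Finset ι)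
    (v : ι → G) (x : G) : |((∑ i ∈ s, single (v i) 1 : ℤ[G]) • φ) x| ≤ s.card * B := by
  rw [sum_single_smul_apply, ← nsmul_eq_mul]
  exact (Finset.abs_sum_le_sum_abs _ _).trans (Finset.sum_le_card_nsmul _ _ _ fun i _ => hB _)

lemma sum_single_prime_nsmul_smul_eq_const {s : Finset ι} {v : ι → G} {φ : G → ℤ} {B k : ℤ}
    (hB : ∀ x, |φ x| ≤ B) (h : (∑ i ∈ s, single (v i) 1 : ℤ[G]) • φ = const G k)
    {p : ℕ} (hp : p.Prime) (hlt : s.card * (2 * B + 1) < p) :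
    (∑ i ∈ s, single (p • v i) 1 : ℤ[G]) • φ = const G k := by
  obtain rfl | hs := s.eq_empty_or_nonempty
  · simpa using h
  funext x
  have hB₀ : 0 ≤ B := (abs_nonneg _).trans (hB x)
  have hcard : s.card < p := by
    zify
    nlinarith
  have hdvd := prime_dvd_sum_single_nsmul_smul_sub h hp
    (hp.coprime_iff_not_dvd.2 (Nat.not_dvd_of_pos_of_lt hs.card_pos hcard)).symm x
  have hk : |k| ≤ s.card * B := by simpa [h] using abs_sum_single_smul_apply_le hB s v x
  have hsmall : |((∑ i ∈ s, single (p • v i) 1 : ℤ[G]) • φ) x - k| < p := by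
    have hsub := abs_sub (((∑ i ∈ s, single (p • v i) 1 : ℤ[G]) • φ) x) k
    linarith [abs_sum_single_smul_apply_le hB s (fun i => p • v i) x]
  exact sub_eq_zero.1 (Int.eq_zero_of_abs_lt_dvd hdvd hsmall)

lemma sum_single_nsmul_smul_eq_const {s : Finset ι} {v : ι → G} {φ : G → ℤ} {B k : ℤ}
    (hB : ∀ x, |φ x| ≤ B) (h : (∑ i ∈ s, single (v i) 1 : ℤ[G]) • φ = const G k)
    {N n : ℕ} (hN : s.card * (2 * B + 1) ≤ N) (hn₀ : n ≠ 0) (hn : n.Coprime N.factorial) :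
    (∑ i ∈ s, single (n • v i) 1 : ℤ[G]) • φ = const G k := by
  induction n using induction_on_primes with
  | zero => exact absurd rfl hn₀
  | one => simpa using h
  | prime_mul p n hp ih =>
    have hn' := ih (right_ne_zero_of_mul hn₀) hn.coprime_mul_left
    have hNp : N < p := by
      by_contra! hle
      exact hp.coprime_iff_not_dvd.1 hn.coprime_mul_right (hp.dvd_factorial.2 hle)
    simpa only [mul_smul] using
      sum_single_prime_nsmul_smul_eq_const hB hn' hp (hN.trans_lt (mod_cast hNp))

end Dilation

section Elimination

variable {R M ι : Type*} [CommRing R] [AddCommGroup M] [Module R M]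

lemma sum_eval_smul_eq_zero {s : Finset ι} {e : ι → R} {m : ι → M}
    (h : ∀ n : ℕ, ∑ i ∈ s, e i ^ n • m i = 0) (p : Polynomial R) :
    ∑ i ∈ s, p.eval (e i) • m i = 0 := by
  simp_rw [Polynomial.eval_eq_sum_range, Finset.sum_smul, mul_smul]
  rw [Finset.sum_comm]
  simp_rw [← Finset.smul_sum, h, smul_zero, Finset.sum_const_zero]

lemma prod_sub_smul_eq_zero [DecidableEq ι] {s : Finset ι} {e : ι → R} {m : ι → M}
    (h : ∀ n : ℕ, ∑ i ∈ s, e i ^ n • m i = 0) {i : ι} (hi : i ∈ s) :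
    (∏ j ∈ s.erase i, (e i - e j)) • m i = 0 := by
  have hsum := sum_eval_smul_eq_zero h (Lagrange.nodal (s.erase i) e)
  rwa [Finset.sum_eq_single_of_mem i hi, Lagrange.eval_nodal] at hsum
  intro j hj hji
  rw [Lagrange.eval_nodal_at_node (Finset.mem_erase.2 ⟨hji, hj⟩), zero_smul]

end Elimination

section Periods

variable {G ι : Type*} [AddCommGroup G]

lemma periodic_prod_diffOp_smul [DecidableEq G] {F : Finset G} {φ : G → ℤ} {k : ℤ}
    {f₀ : G} (hf₀ : f₀ ∈ F) {q : ℕ}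
    (h : ∀ n : ℕ, (∑ f ∈ F, single ((1 + q * n) • (f - f₀)) 1 : ℤ[G]) • φ = const G k) (u : G) :
    Periodic ((∏ f ∈ F.erase f₀, diffOp (q • (f - f₀))) • φ) u := by
  have hrel (n : ℕ) : ∑ f ∈ F, (single (q • (f - f₀)) 1 : ℤ[G]) ^ n •
      (single (f - f₀) 1 : ℤ[G]) • diffOp u • φ = 0 := by
    have hmono (f : G) : (single (q • (f - f₀)) 1 : ℤ[G]) ^ n * single (f - f₀) 1
        = single ((1 + q * n) • (f - f₀)) 1 := by
      rw [single_pow, single_mul_single, one_pow, one_mul, smul_smul, ← succ_nsmul, add_comm 1,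
        mul_comm n]
    simp_rw [smul_smul, ← mul_assoc, hmono, ← Finset.sum_smul, ← Finset.sum_mul, mul_smul]
    rw [smul_comm, h, diffOp_smul_eq_zero_iff]
    exact fun _ => rfl
  have hzero := prod_sub_smul_eq_zero hrel hf₀
  rw [← diffOp_smul_eq_zero_iff, smul_comm]
  simpa only [sub_self, smul_zero, ← one_def, one_smul, diffOp] using hzero

lemma exists_forall_periodic_prod_diffOp_smul [DecidableEq G] {F : Finset G} {φ : G → ℤ} {k : ℤ}
    (hφ : φ ∈ boundedFunctions G) (h : ∀ x, ∑ f ∈ F, φ (x - f) = k) :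
    ∃ q : ℕ, q ≠ 0 ∧ ∀ f₀ ∈ F, ∀ u,
      Periodic ((∏ f ∈ F.erase f₀, diffOp (q • (f - f₀))) • φ) u := by
  obtain ⟨B, hB⟩ := hφ
  let N := (F.card * (2 * B + 1)).toNat
  refine ⟨N.factorial, N.factorial_ne_zero, fun f₀ hf₀ =>
    periodic_prod_diffOp_smul (k := k) hf₀ fun n => ?_⟩
  refine sum_single_nsmul_smul_eq_const hB ?_ (Int.self_le_toNat _) (by omega)
    ((Nat.coprime_add_mul_left_left _ _ _).2 (Nat.coprime_one_left _))
  funext x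
  simpa [sum_single_smul_apply, sub_sub_eq_add_sub, add_sub_right_comm] using h (x + f₀)

/-- `φ` is periodic under some nonzero integer multiple of `u`. -/
def HasPeriodAlong (u : G) (φ : G → ℤ) : Prop := ∃ n : ℤ, n ≠ 0 ∧ Periodic φ (n • u)

lemma HasPeriodAlong.of_diffOp_smul {u : G} {φ : G → ℤ} (hφ : φ ∈ boundedFunctions G) {n : ℤ}
    (hn : n ≠ 0) (h : HasPeriodAlong u (diffOp (n • u) • φ)) : HasPeriodAlong u φ := by
  obtain ⟨m, hm, hper⟩ := h
  have hper' : Periodic (diffOp ((n * m) • u) • φ) (n • u) := by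
    rw [periodic_diffOp_smul_comm, mul_smul]
    exact smul_comm n m u ▸ hper.zsmul n
  refine ⟨n * m, mul_ne_zero hn hm, periodic_of_periodic_diffOp_smul hφ ?_⟩
  rw [mul_comm n, mul_smul] at hper' ⊢
  exact hper'.zsmul m

lemma HasPeriodAlong.of_prod_diffOp_smul {u : G} {S : Submodule ℤ[G] (G → ℤ)}
    (hS : S ≤ boundedFunctions G) {s : Finset ι} {w : ι → G}
    (hw : ∀ i ∈ s, ∀ ψ ∈ S, Periodic ψ (w i) → HasPeriodAlong u ψ) {φ : G → ℤ} (hφ : φ ∈ S)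
    (h : HasPeriodAlong u ((∏ i ∈ s, diffOp (w i)) • φ)) : HasPeriodAlong u φ := by
  induction s using Finset.cons_induction generalizing φ with
  | empty => simpa using h
  | cons i s hi ih =>
    simp only [Finset.mem_cons, forall_eq_or_imp] at hw
    rw [Finset.prod_cons, mul_comm, mul_smul] at h
    obtain ⟨n, hn, hper⟩ := ih hw.2 (S.smul_mem _ hφ) h
    exact .of_diffOp_smul (hS hφ) hn
      (hw.1 _ (S.smul_mem _ hφ) (periodic_diffOp_smul_comm.1 hper))

end Periods

section Plane

/-- The determinant of two vectors of the plane, which vanishes iff they are parallel. -/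
def det₂ (v w : ℤ × ℤ) : ℤ := v.1 * w.2 - v.2 * w.1

lemma det₂_smul (v w z : ℤ × ℤ) : det₂ v w • z = det₂ z w • v + det₂ v z • w := by
  ext <;> simp [det₂] <;> ring

lemma det₂_nsmul (v w : ℤ × ℤ) (n : ℕ) : det₂ v (n • w) = n * det₂ v w := by
  rw [det₂, det₂, Prod.smul_fst, Prod.smul_snd, nsmul_eq_mul, nsmul_eq_mul]
  ring

lemma exists_det₂_ne_zero {v : ℤ × ℤ} (hv : v ≠ 0) : ∃ z, det₂ v z ≠ 0 := by
  by_contra! h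
  exact hv (Prod.ext (by simpa [det₂] using h (0, 1)) (by simpa [det₂] using h (1, 0)))

lemma exists_smul_eq_smul_of_det₂_eq_zero {v w : ℤ × ℤ} (hv : v ≠ 0) (h : det₂ v w = 0) :
    ∃ m n : ℤ, n ≠ 0 ∧ n • w = m • v := by
  obtain ⟨z, hz⟩ := exists_det₂_ne_zero hv
  exact ⟨det₂ w z, det₂ v z, hz, by rw [det₂_smul v z w, h, zero_smul, add_zero]⟩

lemma hasPeriodAlong_of_det₂_eq_zero {φ : ℤ × ℤ → ℤ} {u v : ℤ × ℤ} (hv : v ≠ 0)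
    (hdet : det₂ v u = 0) (hφ : Periodic φ v) : HasPeriodAlong u φ := by
  obtain ⟨m, n, hn, hnm⟩ := exists_smul_eq_smul_of_det₂_eq_zero hv hdet
  exact ⟨n, hn, hnm ▸ hφ.zsmul m⟩

lemma hasPeriodAlong_of_det₂_ne_zero {φ : ℤ × ℤ → ℤ} {v w : ℤ × ℤ} (hdet : det₂ v w ≠ 0)
    (hv : Periodic φ v) (hw : Periodic φ w) (u : ℤ × ℤ) : HasPeriodAlong u φ :=
  ⟨det₂ v w, hdet, det₂_smul v w u ▸ (hv.zsmul _).add_period (hw.zsmul _)⟩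

lemma hasPeriodAlong_of_prod_transversal {ι : Type*} {φ : ℤ × ℤ → ℤ} {u v : ℤ × ℤ}
    (hφ : φ ∈ boundedFunctions (ℤ × ℤ)) (hv : Periodic φ v) {s : Finset ι} {w : ι → ℤ × ℤ}
    (hw : ∀ i ∈ s, det₂ v (w i) ≠ 0)
    (h : HasPeriodAlong u ((∏ i ∈ s, diffOp (w i)) • φ)) : HasPeriodAlong u φ := by
  let S : Submodule ℤ[ℤ × ℤ] (ℤ × ℤ → ℤ) :=
    boundedFunctions (ℤ × ℤ) ⊓ Submodule.torsionBy _ _ (diffOp v)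
  have hS {ψ : ℤ × ℤ → ℤ} : ψ ∈ S ↔ ψ ∈ boundedFunctions (ℤ × ℤ) ∧ Periodic ψ v :=
    and_congr_right' diffOp_smul_eq_zero_iff
  exact .of_prod_diffOp_smul (S := S) inf_le_left
    (fun i hi ψ hψ hper => hasPeriodAlong_of_det₂_ne_zero (hw i hi) (hS.1 hψ).2 hper u)
    (hS.2 ⟨hφ, hv⟩) h

end Plane

section Directions

lemma toR_sub (v w : ℤ × ℤ) : toR (v - w) = toR v - toR w := by
  simp [toR]

lemma toR_zsmul (n : ℤ) (v : ℤ × ℤ) : toR (n • v) = (n : ℝ) • toR v := by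
  simp [toR]

lemma toR_eq_zero_iff {v : ℤ × ℤ} : toR v = 0 ↔ v = 0 := by
  simp [toR, Prod.ext_iff]

lemma toR_mem_span_iff_det₂_eq_zero {v w : ℤ × ℤ} (hv : v ≠ 0) :
    toR w ∈ Submodule.span ℝ {toR v} ↔ det₂ v w = 0 := by
  rw [Submodule.mem_span_singleton]
  constructor
  · rintro ⟨a, ha⟩
    simp only [toR, Prod.smul_mk, smul_eq_mul, Prod.mk.injEq] at ha
    have hdet : (det₂ v w : ℝ) = 0 := by
      push_cast [det₂]
      rw [← ha.1, ← ha.2]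
      ring
    exact_mod_cast hdet
  · intro h
    obtain ⟨m, n, hn, hnm⟩ := exists_smul_eq_smul_of_det₂_eq_zero hv h
    have hn' : (n : ℝ) ≠ 0 := mod_cast hn
    refine ⟨(n : ℝ)⁻¹ * m, ?_⟩
    rw [mul_smul, ← toR_zsmul, ← hnm, toR_zsmul, inv_smul_smul₀ hn']

lemma exists_det₂_sub_ne_zero_of_span_notMem_dirSet {S : Set (ℤ × ℤ)} {v : ℤ × ℤ} (hv : v ≠ 0)
    (h : Submodule.span ℝ {toR v} ∉ dirSet S) :
    ∃ f₁ ∈ S, ∀ f ∈ S, f ≠ f₁ → det₂ v (f - f₁) ≠ 0 := by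
  by_contra! hpair
  refine h ⟨⟨toR v, toR_eq_zero_iff.not.2 hv, rfl⟩, ?_⟩
  rintro a ⟨s, hs, hsa⟩
  obtain ⟨t, ht, hts, hdet⟩ := hpair s hs
  refine ⟨t, ht, s, hs, hts, ?_, hsa⟩
  have hadd := add_mem ((toR_mem_span_iff_det₂_eq_zero hv).2 hdet) hsa
  rwa [toR_sub, sub_add_sub_cancel] at hadd

lemma exists_direction_of_dirSet_subsingleton {S : Set (ℤ × ℤ)} (hS : S.Nonempty)
    (hdir : (dirSet S).Subsingleton) :
    ∃ u ≠ 0, ∀ v, det₂ v u ≠ 0 → ∃ f₁ ∈ S, ∀ f ∈ S, f ≠ f₁ → det₂ v (f - f₁) ≠ 0 := by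
  suffices ∃ u ≠ 0, ∀ v, Submodule.span ℝ {toR v} ∈ dirSet S →
      toR u ∈ Submodule.span ℝ {toR v} by
    obtain ⟨u, hu, hspan⟩ := this
    refine ⟨u, hu, fun v hdet => ?_⟩
    have hv : v ≠ 0 := by
      rintro rfl
      simp [det₂] at hdet
    exact exists_det₂_sub_ne_zero_of_span_notMem_dirSet hv fun hmem =>
      hdet ((toR_mem_span_iff_det₂_eq_zero hv).1 (hspan v hmem))
  obtain hempty | ⟨ℓ, hℓ⟩ := (dirSet S).eq_empty_or_nonempty
  · exact ⟨(1, 0), by simp, by simp [hempty]⟩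
  · obtain ⟨f, hf⟩ := hS
    obtain ⟨s, -, t, -, hst, hs, ht⟩ := hℓ.2 (toR f) ⟨f, hf, by simp⟩
    refine ⟨s - t, sub_ne_zero.2 hst, fun v hv => ?_⟩
    have hsub := sub_mem hs ht
    rwa [sub_sub_sub_cancel_right, ← toR_sub, hdir hℓ hv] at hsub

end Directions

lemma IsTiling.sum_indicator {F : Finset (ℤ × ℤ)} {T : Set (ℤ × ℤ)} (hT : IsTiling F T)
    (x : ℤ × ℤ) : ∑ f ∈ F, T.indicator (1 : ℤ × ℤ → ℤ) (x - f) = 1 := by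
  obtain ⟨⟨t, f⟩, ⟨ht, hf, rfl⟩, huniq⟩ := hT x
  rw [Finset.sum_eq_single_of_mem f hf]
  · simp [ht]
  · intro f' hf' hne
    refine Set.indicator_of_notMem (fun hmem => hne ?_) _
    exact congrArg Prod.snd (huniq (t + f - f', f') ⟨hmem, hf', (sub_add_cancel _ _).symm⟩)

lemma image_add_right_eq_of_periodic_indicator {G : Type*} [AddGroup G] {T : Set G} {g : G}
    (h : Periodic (T.indicator (1 : G → ℤ)) g) : (fun p => p + g) '' T = T := by
  ext x
  rw [Set.image_add_right, Set.mem_preimage, ← sub_eq_add_neg, ← Set.indicator_eq_one_iff_mem ℤ,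
    h.sub_eq, Set.indicator_eq_one_iff_mem]

theorem stmt4_general (F : Finset (ℤ × ℤ)) (hF : F.Nonempty)
    (hdir : (dirSet (F : Set (ℤ × ℤ))).Subsingleton)
    {c : ℤ × ℤ → ℤ} (hc : ∃ B, ∀ x, |c x| ≤ B) {k : ℤ} (h : ∀ x, ∑ f ∈ F, c (x - f) = k) :
    ∃ g : ℤ × ℤ, g ≠ 0 ∧ Periodic c g := by
  classical
  obtain ⟨u, hu, hdirs⟩ := exists_direction_of_dirSet_subsingleton hF hdir
  obtain ⟨q, hq, hprod⟩ := exists_forall_periodic_prod_diffOp_smul hc h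
  obtain ⟨f₀, hf₀⟩ := hF
  have hbdd : Submodule.span ℤ[ℤ × ℤ] {c} ≤ boundedFunctions (ℤ × ℤ) :=
    (Submodule.span_singleton_le_iff_mem c _).2 hc
  have htrade (v) (hv : v ≠ 0) (φ) (hφ : φ ∈ Submodule.span ℤ[ℤ × ℤ] {c}) (hper : Periodic φ v) :
      HasPeriodAlong u φ := by
    by_cases hdet : det₂ v u = 0
    · exact hasPeriodAlong_of_det₂_eq_zero hv hdet hper
    obtain ⟨f₁, hf₁, hdet₁⟩ := hdirs v hdet
    obtain ⟨P, rfl⟩ := Submodule.mem_span_singleton.1 hφ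
    refine hasPeriodAlong_of_prod_transversal (hbdd hφ) hper (s := F.erase f₁)
      (w := fun f => q • (f - f₁)) (fun f hf => ?_) ⟨1, one_ne_zero, ?_⟩
    · rw [det₂_nsmul]
      exact mul_ne_zero (mod_cast hq)
        (hdet₁ f (Finset.mem_of_mem_erase hf) (Finset.ne_of_mem_erase hf))
    · rw [smul_comm]
      exact periodic_smul (hprod f₁ hf₁ _) P
  obtain ⟨n, hn, hper⟩ : HasPeriodAlong u c :=
    .of_prod_diffOp_smul hbdd
      (fun f hf => htrade _ (smul_ne_zero hq (sub_ne_zero.2 (Finset.ne_of_mem_erase hf))))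
      (Submodule.mem_span_singleton_self c) ⟨1, one_ne_zero, hprod f₀ hf₀ _⟩
  exact ⟨n • u, smul_ne_zero hn hu, hper⟩

/-- If `F` is an exact cluster whose direction set contains at most one
line, then every `F`-tiling `T` is `1`-periodic: `T + g = T` for some nonzero `g`. -/
theorem stmt4 (F : Finset (ℤ × ℤ)) (hF : F.Nonempty)
    (hdir : (dirSet (F : Set (ℤ × ℤ))).Subsingleton)
    (T : Set (ℤ × ℤ)) (hT : IsTiling F T) :
    ∃ g : ℤ × ℤ, g ≠ 0 ∧ (fun p => p + g) '' T = T := by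
  obtain ⟨g, hg, hper⟩ := stmt4_general F hF hdir
    ⟨1, fun x => by by_cases hx : x ∈ T <;> simp [hx]⟩ hT.sum_indicator
  exact ⟨g, hg, image_add_right_eq_of_periodic_indicator hper⟩
end
end

section
/- Let c : ℤ² → {0,1} and let u, v ∈ ℤ² be linearly independent vectors such that the Laurent polynomial (U^u − 1)(U^v − 1) annihilates c, i.e., c(w) − c(w − u) − c(w − v) + c(w − u − v) = 0 for all w ∈ ℤ². Then there exist binary configurations c₁, c₂ : ℤ² → {0,1} with c = c₁ + c₂ (pointwise, so their supports are disjoint), u·c₁ = c₁ and v·c₂ = c₂. In particular c is weakly periodic, a sum of at most two 1-periodic binary configurations. -/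
/-!
The annihilation of `c` by `(U^u − 1)(U^v − 1)` means that the difference of `c` in direction `v`
is constant along every line in direction `u`. Hence if `c` is constant on one `u`-line, it is
constant on the translates of that line by `± v`: the union `s` of the `u`-lines on which `c` is
constant is invariant under both `u` and `v`. On `s` the configuration is `u`-periodic. Off `s` it
is `v`-periodic: if the difference `c (w + v) - c w ∈ {-1, 0, 1}` is nonzero, it determines `c w`,
and since it is the same at all points of the `u`-line through `w`, so is `c`, that is, `w ∈ s`.
The two summands are the restrictions of `c` to `s` and to its complement.
-/

noncomputable section

def IsBinary (c : ℤ × ℤ → ℂ) : Prop := ∀ u, c u = 0 ∨ c u = 1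

def shift (g : ℤ × ℤ) (c : ℤ × ℤ → ℂ) : ℤ × ℤ → ℂ := fun u => c (u - g)

def LinIndep (u v : ℤ × ℤ) : Prop := u.1 * v.2 - u.2 * v.1 ≠ 0

open Function Set
open scoped fwdDiff

variable {G A : Type*}

/-- A Sidon set: sums of two elements determine the summands up to order, or equivalently, nonzero
differences of two elements determine both of them. It abstracts the alphabet `{0, 1}` of a binary
configuration; in characteristic two, `{0, 1}` is not a Sidon set, as `0 + 0 = 1 + 1`. -/
def IsSidon [Add A] (S : Set A) : Prop :=
  ∀ ⦃a⦄, a ∈ S → ∀ ⦃b⦄, b ∈ S → ∀ ⦃c⦄, c ∈ S → ∀ ⦃d⦄, d ∈ S → a + b = c + d → a = c ∨ a = d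

lemma isSidon_zero_one [AddGroupWithOne A] [NeZero (2 : A)] : IsSidon ({0, 1} : Set A) := by
  have two_ne : (1 + 1 : A) ≠ 0 := one_add_one_eq_two (R := A) ▸ two_ne_zero
  rintro a (rfl | rfl) b (rfl | rfl) c (rfl | rfl) d (rfl | rfl) h <;>
    simp_all [eq_comm]

lemma IsSidon.eq_of_sub_eq_sub [AddCommGroup A] {S : Set A} (hS : IsSidon S) {a b c d : A}
    (ha : a ∈ S) (hb : b ∈ S) (hc : c ∈ S) (hd : d ∈ S) (h : a - b = c - d) (hab : a ≠ b) :
    b = d := by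
  have hsum : b + c = d + a := by rw [add_comm b, add_comm d, ← sub_eq_sub_iff_add_eq_add, h]
  exact (hS hb hc hd ha hsum).resolve_right hab.symm

lemma periodic_indicator [Add G] [Zero A] {s : Set G} {f : G → A} {g : G}
    (hs : ∀ x, x + g ∈ s ↔ x ∈ s) (hf : ∀ x ∈ s, f (x + g) = f x) :
    Periodic (s.indicator f) g := by
  intro x
  by_cases hx : x ∈ s
  · rw [indicator_of_mem hx, indicator_of_mem ((hs x).2 hx), hf x hx]
  · rw [indicator_of_notMem hx, indicator_of_notMem (mt (hs x).1 hx)]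

section ConstantLines

variable [AddCommGroup G]

/-- The union of the lines `w + ℤ u` on which the configuration `c` is constant. -/
def constantLines (c : G → A) (u : G) : Set G := {w | ∀ i : ℤ, c (w + i • u) = c w}

lemma apply_add_of_mem_constantLines {c : G → A} {u w : G} (hw : w ∈ constantLines c u) :
    c (w + u) = c w := by
  simpa only [one_zsmul] using hw 1

lemma add_mem_constantLines_iff {c : G → A} {u w : G} :
    w + u ∈ constantLines c u ↔ w ∈ constantLines c u := by
  have hline (i : ℤ) : w + u + i • u = w + (i + 1) • u := by module
  constructor
  · intro h i
    have hzero : c w = c (w + u) := by simpa using h (-1)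
    have hi : c (w + i • u) = c (w + u) := by simpa only [hline, sub_add_cancel] using h (i - 1)
    rw [hi, hzero]
  · intro h i
    rw [hline, h, apply_add_of_mem_constantLines h]

variable [AddCommGroup A] {c : G → A} {u v : G}

lemma periodic_fwdDiff_of_annihilated
    (hann : ∀ w, c w - c (w - u) - c (w - v) + c (w - u - v) = 0) :
    Periodic (Δ_[v] c) u := by
  intro w
  have h := hann (w + u + v)
  have e₁ : w + u + v - u = w + v := by abel
  rw [e₁, add_sub_cancel_right, add_sub_cancel_right] at h
  rw [fwdDiff, fwdDiff, ← sub_eq_zero, ← h]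
  abel

lemma add_mem_constantLines_iff_of_periodic_fwdDiff (hper : Periodic (Δ_[v] c) u) {w : G} :
    w + v ∈ constantLines c u ↔ w ∈ constantLines c u := by
  refine forall_congr' fun i => ?_
  have h : c (w + i • u + v) - c (w + i • u) = c (w + v) - c w := hper.zsmul i w
  rw [add_right_comm w v, ← sub_eq_zero, ← sub_eq_zero (b := c w), sub_eq_sub_iff_sub_eq_sub.1 h]

lemma mem_constantLines_of_apply_add_ne {S : Set A} (hS : IsSidon S) (hc : ∀ w, c w ∈ S)
    (hper : Periodic (Δ_[v] c) u) {w : G} (hw : c (w + v) ≠ c w) : w ∈ constantLines c u := by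
  intro i
  have h : c (w + v) - c w = c (w + i • u + v) - c (w + i • u) := (hper.zsmul i w).symm
  exact (hS.eq_of_sub_eq_sub (hc _) (hc _) (hc _) (hc _) h hw).symm

end ConstantLines

theorem stmt5_general [AddCommGroup G] [AddCommGroup A] {S : Set A} (hS : IsSidon S)
    {c : G → A} (hc : ∀ w, c w ∈ S) (u v : G)
    (hann : ∀ w, c w - c (w - u) - c (w - v) + c (w - u - v) = 0) :
    ∃ s : Set G, Periodic (s.indicator c) u ∧ Periodic (sᶜ.indicator c) v := by
  have hper := periodic_fwdDiff_of_annihilated hann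
  refine ⟨constantLines c u,
    periodic_indicator (fun _ => add_mem_constantLines_iff)
      fun _ => apply_add_of_mem_constantLines,
    periodic_indicator
      (fun _ => not_congr (add_mem_constantLines_iff_of_periodic_fwdDiff hper))
      fun w hw => ?_⟩
  by_contra hne
  exact hw (mem_constantLines_of_apply_add_ne hS hc hper hne)

lemma IsBinary.indicator {c : ℤ × ℤ → ℂ} (hc : IsBinary c) (s : Set (ℤ × ℤ)) :
    IsBinary (s.indicator c) := by
  intro w
  by_cases hw : w ∈ s
  · simpa only [indicator_of_mem hw] using hc w
  · exact Or.inl (indicator_of_notMem hw c)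

lemma shift_eq_of_periodic {c : ℤ × ℤ → ℂ} {g : ℤ × ℤ} (h : Periodic c g) : shift g c = c :=
  funext h.sub_eq

/-- If a binary configuration `c` is annihilated by
`(U^u − 1)(U^v − 1)` for linearly independent `u, v ∈ ℤ²`, then `c = c₁ + c₂` with
`c₁, c₂` binary configurations (so with disjoint supports), `u·c₁ = c₁` and `v·c₂ = c₂`;
in particular `c` is a sum of at most two `1`-periodic binary configurations. -/
theorem stmt5 (c : ℤ × ℤ → ℂ) (hbin : IsBinary c) (u v : ℤ × ℤ)
    (huv : LinIndep u v)
    (hann : ∀ w : ℤ × ℤ, c w - c (w - u) - c (w - v) + c (w - u - v) = 0) :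
    ∃ c₁ c₂ : ℤ × ℤ → ℂ, IsBinary c₁ ∧ IsBinary c₂ ∧ c = c₁ + c₂ ∧
      shift u c₁ = c₁ ∧ shift v c₂ = c₂ := by
  obtain ⟨s, hu, hv⟩ := stmt5_general (S := {0, 1}) isSidon_zero_one hbin u v hann
  exact ⟨s.indicator c, sᶜ.indicator c, hbin.indicator s, hbin.indicator sᶜ,
    (indicator_self_add_compl s c).symm, shift_eq_of_periodic hu, shift_eq_of_periodic hv⟩
end
end

section
/- Let d : ℤ² → {0,1} satisfy d(a+1, b+1) + d(a, b) = d(a+1, b) + d(a, b+1) for all (a, b) ∈ ℤ². Then either d(a+1, b) = d(a, b) for all (a, b) ∈ ℤ², or d(a, b+1) = d(a, b) for all (a, b) ∈ ℤ². In other words, d is invariant under translation by (1,0) or under translation by (0,1). -/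
/-!
By the equation on unit squares, `d (a + 1, b) - d (a, b)` is independent of `b`, and hence the
analogous equation `d (a', b') + d (a, b) = d (a', b) + d (a, b')` holds on every rectangle.
If the four corners take only two values, and doubling separates these, then each corner has the
same value as one of its two neighbours. The rectangle equation carries equality along one side
over to the opposite side, so a horizontal and a vertical segment along which `d` changes would
span a rectangle on which no two neighbouring corners agree.
-/

theorem eq_of_periodic_one {A : Type*} {f : ℤ → A} (hf : Function.Periodic f 1) (m n : ℤ) :
    f m = f n := by
  simpa only [Int.cast_id, mul_one, add_sub_cancel] using hf.int_mul (m - n) n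

theorem add_corners_eq_of_unit_squares {A : Type*} [AddCommGroup A] {d : ℤ × ℤ → A}
    (h : ∀ a b : ℤ, d (a + 1, b + 1) + d (a, b) = d (a + 1, b) + d (a, b + 1)) (a a' b b' : ℤ) :
    d (a', b') + d (a, b) = d (a', b) + d (a, b') := by
  have hfst (a : ℤ) : Function.Periodic (fun b ↦ d (a + 1, b) - d (a, b)) 1 := fun b ↦
    sub_eq_sub_iff_add_eq_add.mpr (h a b)
  have hsnd : Function.Periodic (fun a ↦ d (a, b') - d (a, b)) 1 := fun a ↦
    sub_eq_sub_iff_sub_eq_sub.mp (eq_of_periodic_one (hfst a) b' b)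
  rw [add_comm (d (a', b))]
  exact sub_eq_sub_iff_add_eq_add.mp (eq_of_periodic_one hsnd a' a)

theorem eq_or_eq_of_add_eq_add_of_two_valued {A : Type*} [Add A] [IsRightCancelAdd A]
    {x y p q r s : A} (hxy : x + x = y + y → x = y) (hp : p = x ∨ p = y)
    (hq : q = x ∨ q = y) (hr : r = x ∨ r = y) (hs : s = x ∨ s = y) (h : p + q = r + s) :
    p = r ∨ p = s := by
  by_contra! ⟨hpr, hps⟩
  obtain rfl : s = r := by grind only
  have hqp : q ≠ s := fun hqs ↦ hpr (add_right_cancel (hqs ▸ h))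
  obtain rfl : q = p := by grind only
  have hdouble : x + x = y + y := by grind only
  obtain rfl : x = y := hxy hdouble
  grind only

theorem const_fst_or_const_snd_of_two_valued {α β A : Type*} [AddCommMagma A] [IsCancelAdd A]
    {x y : A} (hxy : x + x = y + y → x = y) {d : α × β → A} (hd : ∀ w, d w = x ∨ d w = y)
    (h : ∀ a a' b b', d (a', b') + d (a, b) = d (a', b) + d (a, b')) :
    (∀ a a' b, d (a', b) = d (a, b)) ∨ (∀ a b b', d (a, b') = d (a, b)) := by
  by_contra! ⟨⟨a, a', b₀, hfst⟩, ⟨a₀, b, b', hsnd⟩⟩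
  have hfst' : d (a', b') ≠ d (a, b') := fun hv ↦
    hfst (add_right_cancel (b := d (a, b')) (by rw [← h a a' b₀ b', hv, add_comm]))
  have hsnd' : d (a', b') ≠ d (a', b) := fun hv ↦
    hsnd (add_left_cancel (hv ▸ h a₀ a' b b')).symm
  exact (eq_or_eq_of_add_eq_add_of_two_valued hxy (hd _) (hd _) (hd _) (hd _)
    (h a a' b b')).elim hsnd' hfst'

theorem stmt6_general {A : Type*} [AddCommGroup A] {x y : A} (hxy : x + x = y + y → x = y)
    {d : ℤ × ℤ → A} (hd : ∀ w, d w = x ∨ d w = y)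
    (h : ∀ a b : ℤ, d (a + 1, b + 1) + d (a, b) = d (a + 1, b) + d (a, b + 1)) :
    (∀ a b : ℤ, d (a + 1, b) = d (a, b)) ∨ (∀ a b : ℤ, d (a, b + 1) = d (a, b)) :=
  (const_fst_or_const_snd_of_two_valued hxy hd (add_corners_eq_of_unit_squares h)).imp
    (fun hfst a ↦ hfst a (a + 1)) (fun hsnd a b ↦ hsnd a b (b + 1))

/-- If `d : ℤ² → {0,1}` satisfies
`d(a+1,b+1) + d(a,b) = d(a+1,b) + d(a,b+1)` everywhere, then `d` is invariant under
translation by `(1,0)` or under translation by `(0,1)`. -/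
theorem stmt6 (d : ℤ × ℤ → ℤ) (hbin : ∀ w : ℤ × ℤ, d w = 0 ∨ d w = 1)
    (h : ∀ a b : ℤ, d (a + 1, b + 1) + d (a, b) = d (a + 1, b) + d (a, b + 1)) :
    (∀ a b : ℤ, d (a + 1, b) = d (a, b)) ∨ (∀ a b : ℤ, d (a, b + 1) = d (a, b)) :=
  stmt6_general (by decide) hbin h
end

section
/- There exists a configuration c : ℤ² → {0, 1, 2} such that c(w) − c(w − (1,0)) − c(w − (0,1)) + c(w − (1,1)) = 0 for all w ∈ ℤ² (i.e. c is annihilated by (U^{(1,0)} − 1)(U^{(0,1)} − 1)), and yet c is not constant on any infinite arithmetic progression: for every p ∈ ℤ² and every nonzero g ∈ ℤ² there exist integers n, m with c(p + n·g) ≠ c(p + m·g). In particular, no nonempty level set c⁻¹(i) can be partitioned into finitely many 1-periodic subsets of ℤ². -/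
/-- A subset of `ℤ²` is `1`-periodic if it is invariant under translation by some
nonzero vector. -/
def OnePeriodicSet (S : Set (ℤ × ℤ)) : Prop :=
  ∃ g : ℤ × ℤ, g ≠ 0 ∧ (fun p => p + g) '' S = S

/-!
A configuration of the form `c (x, y) = a x + b y` is annihilated by
`(U^{(1,0)} − 1)(U^{(0,1)} − 1)`. Let `a` and `b` be the binary digits of weight `1` and `2` of
`Nat.log 2 |x|`. For `g ≠ 0`, the logarithm of `p + 3 * 2 ^ j * g` is eventually `j` plus a
constant, so replacing `j` by `j + 1` flips `a`, while replacing `j` by `j + 2` flips `b` and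
preserves `a`. Hence a progression whose direction has nonzero second coordinate is separated by
the step `j ↦ j + 2`, and a horizontal one by the step `j ↦ j + 1`.
-/

open Filter

lemma fst_add_snd_mixed_difference_eq_zero {G H A : Type*} [AddGroup G] [AddGroup H]
    [AddCommGroup A] (a : G → A) (b : H → A) (s : G) (t : H) (w : G × H) :
    (a w.1 + b w.2) - (a (w - (s, 0)).1 + b (w - (s, 0)).2)
      - (a (w - (0, t)).1 + b (w - (0, t)).2) + (a (w - (s, t)).1 + b (w - (s, t)).2) = 0 := by
  simp only [Prod.fst_sub, Prod.snd_sub, sub_zero]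
  abel

lemma pow_log_lt_mul_of_coprime {b k n : ℕ} (hk : 1 < k) (hkb : k.Coprime b) (hn : n ≠ 0) :
    b ^ Nat.log b (k * n) < k * n := by
  refine (Nat.pow_log_le_self b (by positivity)).lt_of_ne fun h => hk.ne' ?_
  have hdvd : k ∣ b ^ Nat.log b (k * n) := (dvd_mul_right k n).trans h.symm.dvd
  exact (hkb.pow_right _).eq_one_of_dvd hdvd

/-- As `|g|` is not a power of `b`, the number `b ^ j * |g|` is at distance at least `b ^ j` from
the powers of `b` on both sides of it, so adding `p` does not reach them. -/
lemma log_natAbs_add_pow_mul {b j : ℕ} (hb : 1 < b) {p g : ℤ} (hp : p.natAbs < b ^ j)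
    (hg : b ^ Nat.log b g.natAbs < g.natAbs) :
    Nat.log b (p + b ^ j * g).natAbs = j + Nat.log b g.natAbs := by
  set L := Nat.log b g.natAbs
  have hmul : (b ^ j * g : ℤ).natAbs = b ^ j * g.natAbs := by
    simp only [Int.natAbs_mul, Int.natAbs_pow, Int.natAbs_natCast]
  have hlower : b ^ (j + L) + b ^ j ≤ b ^ j * g.natAbs := by
    rw [pow_add, ← mul_add_one]
    exact Nat.mul_le_mul_left _ hg
  have hupper : b ^ j * g.natAbs + b ^ j ≤ b ^ (j + L + 1) := by
    rw [add_assoc, pow_add, ← mul_add_one]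
    exact Nat.mul_le_mul_left _ (Nat.lt_pow_succ_log_self hb _)
  apply Nat.log_eq_of_pow_le_of_lt_pow <;> omega

lemma eventually_log_natAbs_add_mul {b k : ℕ} (hb : 1 < b) (hk : 1 < k) (hkb : k.Coprime b)
    (p : ℤ) {g : ℤ} (hg : g ≠ 0) :
    ∀ᶠ j : ℕ in atTop,
      Nat.log b (p + k * b ^ j * g).natAbs = j + Nat.log b (k * g.natAbs) := by
  have hkg : (k * g : ℤ).natAbs = k * g.natAbs := by rw [Int.natAbs_mul, Int.natAbs_natCast]
  filter_upwards [(tendsto_pow_atTop_atTop_of_one_lt hb).eventually_gt_atTop p.natAbs] with j hj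
  have hlt := pow_log_lt_mul_of_coprime hk hkb (Int.natAbs_ne_zero.mpr hg)
  rw [← hkg] at hlt ⊢
  rw [mul_comm (k : ℤ), mul_assoc]
  exact log_natAbs_add_pow_mul hb hj hlt

/-- The binary digit of weight `2 ^ i` of `⌊log₂ |x|⌋`, the building block of the configuration.
Since `Nat.log 2 0 = 0`, all digits vanish at `x = 0`. -/
def logDigit (i : ℕ) (x : ℤ) : ℕ := Nat.log 2 x.natAbs / 2 ^ i % 2

lemma logDigit_le_one (i : ℕ) (x : ℤ) : logDigit i x ≤ 1 :=
  Nat.le_of_lt_succ (Nat.mod_lt _ two_pos)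

lemma eventually_logDigit_add_mul (i : ℕ) (p : ℤ) {g : ℤ} (hg : g ≠ 0) :
    ∃ L : ℕ, ∀ᶠ j : ℕ in atTop, logDigit i (p + 3 * 2 ^ j * g) = (j + L) / 2 ^ i % 2 := by
  refine ⟨Nat.log 2 (3 * g.natAbs), ?_⟩
  filter_upwards [eventually_log_natAbs_add_mul (b := 2) (k := 3) (by norm_num) (by norm_num)
    (by norm_num) p hg] with j hj
  exact congrArg (· / 2 ^ i % 2) hj

lemma eventually_logDigit_ne (i : ℕ) (p : ℤ) {g : ℤ} (hg : g ≠ 0) :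
    ∀ᶠ j : ℕ in atTop,
      logDigit i (p + 3 * 2 ^ (j + 2 ^ i) * g) ≠ logDigit i (p + 3 * 2 ^ j * g) := by
  obtain ⟨L, hL⟩ := eventually_logDigit_add_mul i p hg
  filter_upwards [hL, (tendsto_add_atTop_nat (2 ^ i)).eventually hL] with j hj hj'
  rw [hj, hj', add_right_comm, Nat.add_div_right _ (by positivity)]
  omega

lemma eventually_logDigit_eq (i : ℕ) (p g : ℤ) :
    ∀ᶠ j : ℕ in atTop,
      logDigit i (p + 3 * 2 ^ (j + 2 ^ (i + 1)) * g) = logDigit i (p + 3 * 2 ^ j * g) := by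
  obtain rfl | hg := eq_or_ne g 0
  · simp only [mul_zero, eventually_true]
  obtain ⟨L, hL⟩ := eventually_logDigit_add_mul i p hg
  filter_upwards [hL, (tendsto_add_atTop_nat (2 ^ (i + 1))).eventually hL] with j hj hj'
  rw [hj, hj', add_right_comm, pow_succ, Nat.add_mul_div_left _ _ (by positivity),
    Nat.add_mod_right]

/-- The configuration `c (x, y) = a x + b y` on `ℤ²` that witnesses the theorem, `a` and `b` being
the two lowest binary digits of the logarithm. -/
def logDigitSum (w : ℤ × ℤ) : ℤ := logDigit 0 w.1 + logDigit 1 w.2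

lemma logDigitSum_mem (w : ℤ × ℤ) : logDigitSum w ∈ ({0, 1, 2} : Set ℤ) := by
  have h₀ := logDigit_le_one 0 w.1
  have h₁ := logDigit_le_one 1 w.2
  simp only [logDigitSum, Set.mem_insert_iff, Set.mem_singleton_iff]
  omega

lemma exists_logDigitSum_ne (p : ℤ × ℤ) {g : ℤ × ℤ} (hg : g ≠ 0) :
    ∃ n m : ℤ, logDigitSum (p + n • g) ≠ logDigitSum (p + m • g) := by
  obtain ⟨p₁, p₂⟩ := p
  obtain ⟨g₁, g₂⟩ := g
  simp only [logDigitSum, Prod.smul_mk, Prod.mk_add_mk, smul_eq_mul]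
  obtain rfl | hg₂ := eq_or_ne g₂ 0
  · have hg₁ : g₁ ≠ 0 := by
      rintro rfl
      exact hg rfl
    obtain ⟨j, hj⟩ := (eventually_logDigit_ne 0 p₁ hg₁).exists
    refine ⟨3 * 2 ^ (j + 2 ^ 0), 3 * 2 ^ j, ?_⟩
    simpa only [mul_zero, ne_eq, add_left_inj, Nat.cast_inj] using hj
  · obtain ⟨j, hne, heq⟩ :=
      ((eventually_logDigit_ne 1 p₂ hg₂).and (eventually_logDigit_eq 0 p₁ g₁)).exists
    refine ⟨3 * 2 ^ (j + 2 ^ 1), 3 * 2 ^ j, ?_⟩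
    simpa only [heq, zero_add, ne_eq, add_right_inj, Nat.cast_inj] using hne

/-- There is a configuration `c : ℤ² → {0,1,2}` annihilated by
`(U^{(1,0)} − 1)(U^{(0,1)} − 1)` which is not constant on any infinite arithmetic
progression; in particular no nonempty level set of `c` can be partitioned into finitely
many `1`-periodic subsets. -/
theorem stmt8 :
    ∃ c : ℤ × ℤ → ℤ,
      (∀ w : ℤ × ℤ, c w ∈ ({0, 1, 2} : Set ℤ)) ∧
      (∀ w : ℤ × ℤ, c w - c (w - (1, 0)) - c (w - (0, 1)) + c (w - (1, 1)) = 0) ∧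
      (∀ p g : ℤ × ℤ, g ≠ 0 → ∃ n m : ℤ, c (p + n • g) ≠ c (p + m • g)) :=
  ⟨logDigitSum, logDigitSum_mem,
    fst_add_snd_mixed_difference_eq_zero (fun x => (logDigit 0 x : ℤ))
      (fun y => (logDigit 1 y : ℤ)) 1 1,
    fun p _ hg => exists_logDigitSum_ne p hg⟩
end

section
/- Let p be a prime and S ⊆ ℤ² a finite set of cardinality p² such that for every a ∈ ℤ, p divides the cardinality of {s ∈ S : s₁ = a} and p divides the cardinality of {s ∈ S : s₂ = a} (i.e. every vertical line and every horizontal line meets S in a set of cardinality divisible by p). Then there exist finite sets A, B ⊆ ℤ with |A| = |B| = p and S = A × B. -/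
/-!
At most `m * n` points whose nonempty vertical lines carry at least `n` of them occupy at most `m`
columns; if the nonempty horizontal lines carry at least `m` of them, they occupy at most `n` rows.
On the other hand a single vertical line already meets `n` rows, and a single horizontal line `m`
columns. So there are exactly `m` columns and `n` rows, and with at least `n` points in each column
the whole grid is filled. Divisibility by `p` gives these bounds for `m = n = p`.
-/

section

open Finset

variable {α β γ : Type*} [DecidableEq α] [DecidableEq β] {m n : ℕ}

lemma card_image_le_of_le_card_fiber {S : Finset γ} {f : γ → β} (hn : 0 < n)
    (hcard : #S ≤ n * m) (hfiber : ∀ b ∈ S.image f, n ≤ #{s ∈ S | f s = b}) :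
    #(S.image f) ≤ m :=
  Nat.le_of_mul_le_mul_left ((mul_card_image_le_card S n hfiber).trans hcard) hn

lemma le_card_fiber_of_dvd {S : Finset γ} {f : γ → β} {b : β} (hb : b ∈ S.image f)
    (hdvd : n ∣ #{s ∈ S | f s = b}) : n ≤ #{s ∈ S | f s = b} :=
  Nat.le_of_dvd (card_pos.mpr (fiber_nonempty_iff_mem_image.mpr hb)) hdvd

lemma card_fiber_le_card_image_of_injOn {S : Finset γ} {f : γ → α} {g : γ → β}
    (hfg : Set.InjOn (fun s ↦ (f s, g s)) S) (a : α) :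
    #{s ∈ S | f s = a} ≤ #(S.image g) := by
  refine card_le_card_of_injOn g (fun s hs ↦ ?_) fun s hs t ht hst ↦ ?_
  · exact mem_image_of_mem g (mem_filter.mp hs).1
  · obtain ⟨hsS, hsa⟩ := mem_filter.mp hs
    obtain ⟨htS, hta⟩ := mem_filter.mp ht
    exact hfg hsS htS (Prod.ext (hsa.trans hta.symm) hst)

theorem stmt11_general {S : Finset (α × β)} (hS : S.Nonempty) (hcard : #S ≤ m * n)
    (hvert : ∀ a ∈ S.image Prod.fst, n ≤ #{s ∈ S | s.1 = a})
    (hhoriz : ∀ b ∈ S.image Prod.snd, m ≤ #{s ∈ S | s.2 = b}) :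
    ∃ (A : Finset α) (B : Finset β), #A = m ∧ #B = n ∧ S = A ×ˢ B := by
  have hmn : 0 < m * n := hS.card_pos.trans_le hcard
  obtain ⟨s, hs⟩ := hS
  have hA : #(S.image Prod.fst) = m := le_antisymm
    (card_image_le_of_le_card_fiber (pos_of_mul_pos_right hmn m.zero_le)
      (hcard.trans_eq (mul_comm m n)) hvert)
    ((hhoriz _ (mem_image_of_mem _ hs)).trans
      (card_fiber_le_card_image_of_injOn Prod.swap_injective.injOn s.2))
  have hB : #(S.image Prod.snd) = n := le_antisymm
    (card_image_le_of_le_card_fiber (pos_of_mul_pos_left hmn n.zero_le) hcard hhoriz)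
    ((hvert _ (mem_image_of_mem _ hs)).trans
      (card_fiber_le_card_image_of_injOn Function.injective_id.injOn s.1))
  refine ⟨_, _, hA, hB, eq_of_subset_of_card_le subset_product ?_⟩
  calc #(S.image Prod.fst ×ˢ S.image Prod.snd)
      = n * #(S.image Prod.fst) := by rw [card_product, hB, mul_comm]
    _ ≤ #S := mul_card_image_le_card S n hvert

end

/-- If `p` is prime and `S ⊆ ℤ²` has cardinality `p²` such that every
vertical and every horizontal line meets `S` in a set of cardinality divisible by `p`,
then `S = A × B` for some `A, B ⊆ ℤ` with `|A| = |B| = p`. -/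
theorem stmt11 (p : ℕ) (hp : p.Prime) (S : Finset (ℤ × ℤ)) (hcard : S.card = p ^ 2)
    (hvert : ∀ a : ℤ, p ∣ (S.filter fun s => s.1 = a).card)
    (hhoriz : ∀ a : ℤ, p ∣ (S.filter fun s => s.2 = a).card) :
    ∃ A B : Finset ℤ, A.card = p ∧ B.card = p ∧ S = A ×ˢ B :=
  stmt11_general (Finset.card_pos.mp (hcard ▸ pow_pos hp.pos 2)) (hcard.trans (sq p)).le
    (fun a ha ↦ le_card_fiber_of_dvd ha (hvert a)) fun a ha ↦ le_card_fiber_of_dvd ha (hhoriz a)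
end

section
/- Let p be a prime, F ⊆ ℤ² a finite set containing the origin, and g₀ = (g₁, g₂) ∈ ℤ² a nonzero vector. Suppose there are infinitely many points (x, y) ∈ [0,1)² such that g₁x + g₂y ∈ ℤ and, for every integer α coprime to p, Σ_{(a,b)∈F} exp(2πiα(ax + by)) = 0. Then for every w ∈ ℤ², p divides the cardinality of {g ∈ F : g − w is a rational multiple of g₀}; that is, every line in ℝ² parallel to g₀ meets F in a set of cardinality divisible by p. -/
open Complex

/-!
Write `e x = exp (2πix)`. If the `n`-th power sum of the numbers `z g = e ⟨g, ξ⟩`, `g ∈ F`, vanishes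
for every `n` prime to `p`, take `n = r + p m` with `0 < r < p` and let `m` vary: by independence of
the sequences `m ↦ u ^ m`, already the sum of `z g ^ r` over each fibre `{g ∈ F | z g ^ p = u}`
vanishes. After division by one of its elements such a fibre consists of `p`-th roots of unity whose
`r`-th power sums vanish for `0 < r < p`; by orthogonality exactly one `p`-th of them are equal to
`1`, so `p` divides the size of the fibre.

It remains to choose `ξ` so that every fibre lies on one line parallel to `g₀`. If the fibres of `g`
and `h` agree then `p ⟨g - h, ξ⟩` is an integer, as is `⟨g₀, ξ⟩`; when `g - h` is not parallel to
`g₀`, Cramer's rule leaves only finitely many such `ξ` in the unit square. Infinitely many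
admissible `ξ` are available, so one of them avoids these exceptions for all pairs `g, h ∈ F`.
-/

open Finset FourierTransform

section PowerSums

variable {ι R : Type*} [CommRing R] [IsDomain R] {s : Finset ι}

variable (R) in
lemma linearIndependent_geometric_sequences :
    LinearIndependent R (fun (u : R) (m : ℕ) ↦ u ^ m) :=
  (linearIndependent_monoidHom (Multiplicative ℕ) R).comp (powersHom R) (powersHom R).injective

variable [DecidableEq R]

lemma sum_fiber_eq_zero_of_sum_mul_pow_eq_zero {a v : ι → R}
    (h : ∀ m : ℕ, ∑ i ∈ s, a i * v i ^ m = 0) (u : R) : ∑ i ∈ s with v i = u, a i = 0 := by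
  have hzero : ∑ u ∈ s.image v, (∑ i ∈ s with v i = u, a i) • (fun m : ℕ ↦ u ^ m) = 0 := by
    funext m
    calc (∑ u ∈ s.image v, (∑ i ∈ s with v i = u, a i) • fun m : ℕ ↦ u ^ m) m
        = ∑ u ∈ s.image v, ∑ i ∈ s with v i = u, a i * v i ^ m := by
          simp only [Finset.sum_apply, Pi.smul_apply, smul_eq_mul, sum_mul]
          exact sum_congr rfl fun u _ ↦ sum_congr rfl fun i hi ↦ by rw [(mem_filter.1 hi).2]
      _ = ∑ i ∈ s, a i * v i ^ m := sum_fiberwise_of_maps_to (fun i ↦ mem_image_of_mem v) _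
      _ = 0 := h m
  by_cases hu : u ∈ s.image v
  · exact linearIndependent_iff'.1 (linearIndependent_geometric_sequences R) (s.image v)
      (fun u ↦ ∑ i ∈ s with v i = u, a i) hzero u hu
  · exact sum_eq_zero fun i hi ↦ (hu (mem_image.2 ⟨i, mem_filter.1 hi⟩)).elim

lemma sum_fiber_pow_eq_zero {p : ℕ} {z : ι → R}
    (h : ∀ n : ℕ, n.Coprime p → ∑ i ∈ s, z i ^ n = 0) {r : ℕ} (hr : r.Coprime p) (u : R) :
    ∑ i ∈ s with z i ^ p = u, z i ^ r = 0 := by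
  refine sum_fiber_eq_zero_of_sum_mul_pow_eq_zero (fun m ↦ ?_) u
  simpa only [pow_add, pow_mul] using h (r + p * m) ((Nat.coprime_add_mul_left_left r p m).2 hr)

lemma sum_range_pow_eq_ite_of_pow_eq_one {n : ℕ} {ζ : R} (hζ : ζ ^ n = 1) :
    ∑ r ∈ range n, ζ ^ r = if ζ = 1 then (n : R) else 0 := by
  split_ifs with h
  · simp [h]
  · refine (mul_eq_zero.1 ?_).resolve_left (sub_ne_zero.2 h)
    rw [mul_geom_sum, hζ, sub_self]

lemma card_eq_mul_card_filter_eq_one [CharZero R] {n : ℕ} (hn : n ≠ 0) {ζ : ι → R}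
    (hζ : ∀ i ∈ s, ζ i ^ n = 1)
    (hsum : ∀ r ∈ range n, r ≠ 0 → ∑ i ∈ s, ζ i ^ r = 0) :
    #s = n * #{i ∈ s | ζ i = 1} := by
  have hcast : (#s : R) = n * #{i ∈ s | ζ i = 1} :=
    calc (#s : R)
        = ∑ r ∈ range n, ∑ i ∈ s, ζ i ^ r := by
          rw [sum_eq_single_of_mem 0 (mem_range.2 hn.bot_lt) hsum]
          simp
      _ = ∑ i ∈ s, if ζ i = 1 then (n : R) else 0 := by
          rw [sum_comm]
          exact sum_congr rfl fun i hi ↦ sum_range_pow_eq_ite_of_pow_eq_one (hζ i hi)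
      _ = n * #{i ∈ s | ζ i = 1} := by
          rw [← sum_filter, sum_const, nsmul_eq_mul, mul_comm]
  exact_mod_cast hcast

end PowerSums

lemma dvd_card_fiber_pow {ι K : Type*} [Field K] [CharZero K] [DecidableEq K] {p : ℕ}
    (hp : p.Prime) {s : Finset ι} {z : ι → K}
    (h : ∀ n : ℕ, n.Coprime p → ∑ i ∈ s, z i ^ n = 0) {u : K} (hu : u ≠ 0) :
    p ∣ #{i ∈ s | z i ^ p = u} := by
  obtain hempty | ⟨j, hj⟩ := Finset.eq_empty_or_nonempty {i ∈ s | z i ^ p = u}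
  · simp [hempty]
  have hju : z j ^ p = u := (mem_filter.1 hj).2
  refine ⟨_, card_eq_mul_card_filter_eq_one (ζ := fun i ↦ z i / z j) hp.ne_zero ?_ ?_⟩
  · intro i hi
    rw [div_pow, (mem_filter.1 hi).2, hju, div_self hu]
  · intro r hr hr0
    have hrp : r.Coprime p := (Nat.coprime_of_lt_prime hr0 (mem_range.1 hr) hp).symm
    simp only [div_pow, ← sum_div, sum_fiber_pow_eq_zero h hrp u, zero_div]

lemma dvd_card_fiber_of_factorsThrough {ι α β : Type*} [DecidableEq α] [DecidableEq β] {p : ℕ}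
    {s : Finset ι} {f : ι → α} {c : ι → β} (hfc : ∀ i ∈ s, ∀ j ∈ s, f i = f j → c i = c j)
    (hf : ∀ j ∈ s, p ∣ #{i ∈ s | f i = f j}) (b : β) : p ∣ #{i ∈ s | c i = b} := by
  rw [card_eq_sum_card_image f]
  refine dvd_sum fun a ha ↦ ?_
  obtain ⟨j, hj, rfl⟩ := mem_image.1 ha
  obtain ⟨hjs, rfl⟩ := mem_filter.1 hj
  have hfiber : {i ∈ {i ∈ s | c i = c j} | f i = f j} = {i ∈ s | f i = f j} := by
    rw [filter_filter]
    exact filter_congr fun i hi ↦ ⟨And.right, fun h ↦ ⟨hfc i hi j hjs h, h⟩⟩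
  rw [hfiber]
  exact hf j hjs

/-- The determinant of two vectors of the plane; it vanishes exactly when they are parallel. -/
def cross {R : Type*} [CommRing R] (u v : R × R) : R :=
  u.1 * v.2 - u.2 * v.1

lemma cross_nsmul_sub {R : Type*} [CommRing R] (n : ℕ) (g h v : R × R) :
    cross (n • (g - h)) v = n * (cross g v - cross h v) := by
  simp only [cross, Prod.smul_fst, Prod.smul_snd, Prod.fst_sub, Prod.snd_sub,
    nsmul_eq_mul (α := R)]
  ring

lemma exists_eq_mul_iff_cross_eq_zero {K : Type*} [Field K] {u v : K × K} (hv : v ≠ 0) :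
    (∃ t, u.1 = t * v.1 ∧ u.2 = t * v.2) ↔ cross u v = 0 := by
  rw [cross, sub_eq_zero]
  constructor
  · rintro ⟨t, h₁, h₂⟩
    rw [h₁, h₂]
    ring
  · intro h
    by_cases hv₁ : v.1 = 0
    · have hv₂ : v.2 ≠ 0 := fun hv₂ ↦ hv (Prod.ext hv₁ hv₂)
      exact ⟨u.2 / v.2, by field_simp; exact h, by field_simp⟩
    · exact ⟨u.1 / v.1, by field_simp, by field_simp; exact h.symm⟩

lemma exists_rat_mul_iff_cross_eq {v : ℤ × ℤ} (hv : v ≠ 0) (g w : ℤ × ℤ) :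
    (∃ t : ℚ, ((g.1 - w.1 : ℤ) : ℚ) = t * (v.1 : ℚ) ∧ ((g.2 - w.2 : ℤ) : ℚ) = t * (v.2 : ℚ)) ↔
      cross g v = cross w v := by
  have hvQ : ((v.1 : ℚ), (v.2 : ℚ)) ≠ 0 := by simpa [Prod.ext_iff] using hv
  have hcross : cross (((g.1 - w.1 : ℤ) : ℚ), ((g.2 - w.2 : ℤ) : ℚ)) ((v.1 : ℚ), (v.2 : ℚ)) =
      ((cross g v - cross w v : ℤ) : ℚ) := by
    simp only [cross]
    push_cast
    ring
  rw [← sub_eq_zero (a := cross g v), ← Int.cast_eq_zero (α := ℚ), ← hcross]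
  exact exists_eq_mul_iff_cross_eq_zero
    (u := (((g.1 - w.1 : ℤ) : ℚ), ((g.2 - w.2 : ℤ) : ℚ))) hvQ

/-- The pairing `⟨g, ξ⟩` of the lattice `ℤ²` with the space `ℝ²` of frequencies. -/
def pairing (g : ℤ × ℤ) (ξ : ℝ × ℝ) : ℝ :=
  g.1 * ξ.1 + g.2 * ξ.2

lemma pairing_nsmul_sub (n : ℕ) (g h : ℤ × ℤ) (ξ : ℝ × ℝ) :
    pairing (n • (g - h)) ξ = n * (pairing g ξ - pairing h ξ) := by
  simp only [pairing, Prod.smul_fst, Prod.smul_snd, Prod.fst_sub, Prod.snd_sub,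
    nsmul_eq_mul (α := ℤ)]
  push_cast
  ring

lemma finite_setOf_intCast_mem {B : Set ℝ} (hB : Bornology.IsBounded B) :
    {m : ℤ | (m : ℝ) ∈ B}.Finite := by
  have hcocompact : Bᶜ ∈ Filter.cocompact ℝ := by
    rw [← Metric.cobounded_eq_cocompact]
    exact Bornology.isBounded_def.1 hB
  exact (Filter.mem_cofinite.1 (Int.tendsto_coe_cofinite hcocompact)).subset
    fun _ hm ↦ Set.notMem_compl_iff.2 hm

lemma finite_setOf_mul_eq_intCast {B : Set ℝ} (hB : Bornology.IsBounded B) {d : ℝ} (hd : d ≠ 0) :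
    {x ∈ B | ∃ m : ℤ, d * x = m}.Finite := by
  have hdB : {m : ℤ | (m : ℝ) ∈ (d * ·) '' B}.Finite :=
    finite_setOf_intCast_mem ((lipschitzWith_smul d).isBounded_image hB)
  refine ((hdB.image Int.cast).preimage (mul_right_injective₀ hd).injOn).subset ?_
  rintro x ⟨hx, m, hm⟩
  exact ⟨m, ⟨x, hx, hm⟩, hm.symm⟩

lemma finite_setOf_pairing_eq_intCast {B : Set (ℝ × ℝ)} (hB : Bornology.IsBounded B)
    {u v : ℤ × ℤ} (huv : cross u v ≠ 0) :
    {ξ ∈ B | (∃ k : ℤ, pairing u ξ = k) ∧ ∃ l : ℤ, pairing v ξ = l}.Finite := by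
  have hd : ((cross u v : ℤ) : ℝ) ≠ 0 := Int.cast_ne_zero.2 huv
  refine ((finite_setOf_mul_eq_intCast hB.image_fst hd).prod
    (finite_setOf_mul_eq_intCast hB.image_snd hd)).subset ?_
  rintro ξ ⟨hξ, ⟨k, hk⟩, ⟨l, hl⟩⟩
  refine ⟨⟨⟨ξ, hξ, rfl⟩, v.2 * k - u.2 * l, ?_⟩, ⟨⟨ξ, hξ, rfl⟩, u.1 * l - v.1 * k, ?_⟩⟩
  all_goals
    push_cast
    rw [← hk, ← hl, cross, pairing, pairing]
    push_cast
    ring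

lemma exists_forall_cross_eq_of_pairing_eq_intCast {S : Set (ℝ × ℝ)} (hS : S.Infinite)
    (hSb : Bornology.IsBounded S) {v : ℤ × ℤ} (hv : ∀ ξ ∈ S, ∃ k : ℤ, pairing v ξ = k)
    (F : Finset (ℤ × ℤ)) {n : ℕ} (hn : n ≠ 0) :
    ∃ ξ ∈ S, ∀ g ∈ F, ∀ h ∈ F, (∃ m : ℤ, n * (pairing g ξ - pairing h ξ) = m) →
      cross g v = cross h v := by
  have hfin : (⋃ q ∈ {q ∈ F ×ˢ F | cross q.1 v ≠ cross q.2 v},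
      {ξ ∈ S | (∃ m : ℤ, pairing (n • (q.1 - q.2)) ξ = m) ∧ ∃ k : ℤ, pairing v ξ = k}).Finite := by
    refine Set.Finite.biUnion (finite_toSet _) fun q hq ↦ finite_setOf_pairing_eq_intCast hSb ?_
    rw [cross_nsmul_sub]
    exact mul_ne_zero (mod_cast hn) (sub_ne_zero.2 (mem_filter.1 hq).2)
  obtain ⟨ξ, hξ, hξ'⟩ := (hS.sdiff hfin).nonempty
  refine ⟨ξ, hξ, fun g hg h hh ⟨m, hm⟩ ↦ by_contra fun hne ↦ hξ' ?_⟩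
  refine Set.mem_biUnion (x := (g, h)) (by simp [hg, hh, hne]) ⟨hξ, ⟨m, ?_⟩, hv ξ hξ⟩
  rw [pairing_nsmul_sub, hm]

lemma fourierChar_pow_eq_pow_iff {n : ℕ} {x y : ℝ} :
    (𝐞 x : ℂ) ^ n = (𝐞 y : ℂ) ^ n ↔ ∃ m : ℤ, n * (x - y) = m := by
  have hpow (t : ℝ) : (𝐞 t : ℂ) ^ n = 𝐞 (n * t) := by
    rw [← nsmul_eq_mul, AddChar.map_nsmul_eq_pow, Circle.coe_pow]
  rw [hpow, hpow, Circle.coe_inj, Real.fourierChar_apply', Real.fourierChar_apply',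
    Circle.exp_eq_exp]
  refine exists_congr fun m ↦ ?_
  rw [mul_comm (m : ℝ), ← mul_add, mul_right_inj' Real.two_pi_pos.ne', ← sub_eq_iff_eq_add',
    mul_sub]

lemma exp_two_pi_mul_eq_fourierChar_pow (n : ℕ) (g : ℤ × ℤ) (ξ : ℝ × ℝ) :
    exp (2 * (Real.pi : ℂ) * I * ((n : ℤ) : ℂ) * ((g.1 : ℂ) * (ξ.1 : ℂ) + (g.2 : ℂ) * (ξ.2 : ℂ))) =
      (𝐞 (pairing g ξ) : ℂ) ^ n := by
  rw [Real.fourierChar_apply, ← exp_nat_mul, pairing]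
  push_cast
  congr 1
  ring

/-- Let `p` be a prime, `F ⊆ ℤ²` a finite set containing the origin,
and `g₀ ∈ ℤ²` a nonzero vector. If there are infinitely many points `(x,y) ∈ [0,1)²`
with `g₀.1·x + g₀.2·y ∈ ℤ` satisfying `Σ_{(a,b)∈F} exp(2πiα(ax+by)) = 0` for every
integer `α` coprime to `p`, then every line of `ℝ²` parallel to `g₀` meets `F` in a set
of cardinality divisible by `p`. -/
theorem stmt13 (p : ℕ) (hp : p.Prime) (F : Finset (ℤ × ℤ)) (h0 : (0, 0) ∈ F)
    (g₀ : ℤ × ℤ) (hg₀ : g₀ ≠ 0)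
    (hinf : {xy : ℝ × ℝ |
        0 ≤ xy.1 ∧ xy.1 < 1 ∧ 0 ≤ xy.2 ∧ xy.2 < 1 ∧
        (∃ z : ℤ, (g₀.1 : ℝ) * xy.1 + (g₀.2 : ℝ) * xy.2 = (z : ℝ)) ∧
        (∀ α : ℤ, Int.gcd α (p : ℤ) = 1 →
          ∑ ab ∈ F, Complex.exp (2 * (Real.pi : ℂ) * Complex.I * (α : ℂ) *
            ((ab.1 : ℂ) * (xy.1 : ℂ) + (ab.2 : ℂ) * (xy.2 : ℂ))) = 0)}.Infinite) :
    ∀ w : ℤ × ℤ,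
      p ∣ {g ∈ (F : Set (ℤ × ℤ)) | ∃ t : ℚ,
          ((g.1 - w.1 : ℤ) : ℚ) = t * (g₀.1 : ℚ) ∧
          ((g.2 - w.2 : ℤ) : ℚ) = t * (g₀.2 : ℚ)}.ncard := by
  intro w
  obtain ⟨ξ, ⟨-, -, -, -, -, hsum⟩, hsep⟩ := exists_forall_cross_eq_of_pairing_eq_intCast hinf
    ((Metric.isBounded_Icc (0 : ℝ × ℝ) 1).subset
      fun ξ hξ ↦ ⟨⟨hξ.1, hξ.2.2.1⟩, ⟨hξ.2.1.le, hξ.2.2.2.1.le⟩⟩)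
    (fun ξ hξ ↦ hξ.2.2.2.2.1) F hp.ne_zero
  have hpow (n : ℕ) (hn : n.Coprime p) : ∑ g ∈ F, (𝐞 (pairing g ξ) : ℂ) ^ n = 0 := by
    simpa only [exp_two_pi_mul_eq_fourierChar_pow] using hsum n (by simpa using hn)
  have hline : {g ∈ (F : Set (ℤ × ℤ)) | ∃ t : ℚ,
      ((g.1 - w.1 : ℤ) : ℚ) = t * (g₀.1 : ℚ) ∧ ((g.2 - w.2 : ℤ) : ℚ) = t * (g₀.2 : ℚ)} =
      ({g ∈ F | cross g g₀ = cross w g₀} : Finset (ℤ × ℤ)) := by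
    ext g
    simp only [exists_rat_mul_iff_cross_eq hg₀, Set.mem_ofPred_eq, coe_filter, mem_coe]
  rw [hline, Set.ncard_coe_finset]
  exact dvd_card_fiber_of_factorsThrough (f := fun g ↦ (𝐞 (pairing g ξ) : ℂ) ^ p)
    (fun g hg h hh hgh ↦ hsep g hg h hh (fourierChar_pow_eq_pow_iff.1 hgh))
    (fun h _ ↦ dvd_card_fiber_pow hp hpow (pow_ne_zero p (Circle.coe_ne_zero _))) _
end

section
/- Let p be a prime, F ⊆ ℤ² a cluster of cardinality p², and T an F-tiling. Then the orbit closure of the indicator configuration 1_T contains a point x for which there exist linearly independent vectors u, v ∈ ℤ² with x(w) − x(w − u) − x(w − v) + x(w − u − v) = 0 for all w ∈ ℤ² (i.e. a point annihilated by the Laurent polynomial (U^u − 1)(U^v − 1), hence of order at most 2). -/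
/-!
The configuration `c = 1_T` itself is annihilated by some `(U^u - 1)(U^v - 1)`, so no passage to a
limit is needed. Write `f = ∑_{v ∈ F} U^v`; the tiling equation is `f c = 1`.

* By the Frobenius congruence `f^q ≡ f(U^q)` modulo primes `q ≠ p`, also `f(U^n) c = 1` for all
  `n ≥ 1` coprime to `p`.
* Eliminating the terms of `f(U^n)` from these equations for `n = 1 + kp` yields a product of
  binomials `U^s - 1` with `s ≠ 0` that annihilates `c`. Take one with as few factors as possible.
  A bounded configuration annihilated by `(U^t - 1)²` is annihilated by `U^t - 1`, so its
  directions are pairwise independent.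
* Suppose there are at least two factors. All factors but `U^s - 1`, applied to `c`, give a bounded
  configuration `e` with period `s`, annihilated by `f(U^n)` for `n` coprime to `p`, and minimality
  forbids a second period of `e` along another direction `t` of the product. With `D = |det(s, t)|`,
  the congruence `f(U^D) e ≡ 0` modulo `p` is a linear recurrence for `e` in the direction `t`,
  whose coefficients count the points of `F` on the lines with direction `s`. If one of these counts
  were prime to `p`, then `U^{Mt} - 1` would be divisible by `p` modulo the annihilator of `e`,
  hence `U^{p^k M t} - 1` by `p^{k + 1}`, and boundedness would make `p^k M t` a period of `e`.
  So every line with direction `s` meets `F` in a multiple of `p` points.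
* A set of `p²` points has this property for at most two directions: those two make it a grid in
  adapted coordinates, and some line in any third direction meets it in a single corner.
  Thus a minimal product has at most two factors.
-/

noncomputable section

/-- The orbit closure of a configuration: the closure of its translation orbit in the
product topology (for a `{0,1}`-valued configuration this coincides with the closure in
`{0,1}^{ℤ²}` with `{0,1}` discrete). -/
def orbitClosure (c : ℤ × ℤ → ℂ) : Set (ℤ × ℤ → ℂ) :=
  closure {y | ∃ g : ℤ × ℤ, y = shift g c}

open Finset

open scoped AddMonoidAlgebra

namespace ClusterTiling

section Congruences

variable {R ι : Type*} [CommRing R] {p : ℕ}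

lemma dvd_sum_pow_sub_sum_pow (hp : p.Prime) (s : Finset ι) (f : ι → R) :
    (p : R) ∣ (∑ i ∈ s, f i) ^ p - ∑ i ∈ s, f i ^ p := by
  classical
  induction s using Finset.induction_on with
  | empty => simp [hp.ne_zero]
  | insert a s ha ih =>
    obtain ⟨r, hr⟩ := exists_add_pow_prime_eq hp (f a) (∑ i ∈ s, f i)
    obtain ⟨t, ht⟩ := ih
    rw [Finset.sum_insert ha, Finset.sum_insert ha, hr]
    exact ⟨t + f a * (∑ i ∈ s, f i) * r, by linear_combination ht⟩

lemma dvd_sum_pow_prime_pow_sub_sum_pow (hp : p.Prime) (s : Finset ι) (f : ι → R) (k : ℕ) :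
    (p : R) ∣ (∑ i ∈ s, f i) ^ p ^ k - ∑ i ∈ s, f i ^ p ^ k := by
  induction k with
  | zero => simp
  | succ k ih =>
    have hpow := ih.trans (sub_dvd_pow_sub_pow _ _ p)
    have hsum := dvd_sum_pow_sub_sum_pow hp s fun i => f i ^ p ^ k
    simpa only [sub_add_sub_cancel, ← pow_mul, ← pow_succ] using dvd_add hpow hsum

/-- Subtracting `x a` times the identity for `k` from the identity for `k + 1` removes the term
of `a`. -/
lemma prod_sub_one_smul_eq_zero {M : Type*} [AddCommGroup M] [Module R M] (s : Finset ι)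
    (x : ι → R) (c : ι → M) (d : M) (h : ∀ k : ℕ, d + ∑ i ∈ s, x i ^ k • c i = 0) :
    (∏ i ∈ s, (x i - 1)) • d = 0 := by
  classical
  induction s using Finset.induction_on generalizing c d with
  | empty => simpa using h 0
  | insert a s ha ih =>
    rw [Finset.prod_insert ha, mul_comm, mul_smul]
    refine ih (fun i => (x a - x i) • c i) _ fun k => ?_
    have hk := congrArg (x a • ·) (h k)
    have hk' := h (k + 1)
    simp only [Finset.sum_insert ha, smul_add, Finset.smul_sum, smul_zero] at hk hk'
    have hs : ∑ i ∈ s, x i ^ k • (x a - x i) • c i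
        = ∑ i ∈ s, x a • x i ^ k • c i - ∑ i ∈ s, x i ^ (k + 1) • c i := by
      rw [← Finset.sum_sub_distrib]
      exact Finset.sum_congr rfl fun i _ => by module
    rw [hs]
    linear_combination (norm := module) hk - hk'

end Congruences

section FiniteOrder

lemma isOfFinOrder_of_isIntegral {K A : Type*} [CommRing K] [Finite K] [Ring A]
    [Algebra K A] {y : Aˣ} (hy : IsIntegral K (y : A)) : IsOfFinOrder y := by
  have : Module.Finite K (Algebra.adjoin K {(y : A)}) :=
    Module.Finite.iff_fg.2 hy.fg_adjoin_singleton
  have : Finite (Algebra.adjoin K {(y : A)}) := Module.finite_of_finite K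
  by_contra hfin
  have hinj := injective_pow_iff_not_isOfFinOrder.2 hfin
  have hmem (n : ℕ) : ((y ^ n : Aˣ) : A) ∈ Algebra.adjoin K {(y : A)} := by
    rw [Units.val_pow_eq_pow_val]
    exact pow_mem (Algebra.self_mem_adjoin_singleton K _) n
  exact not_injective_infinite_finite (fun n : ℕ => (⟨_, hmem n⟩ : Algebra.adjoin K {(y : A)}))
    fun m n h => hinj (Units.ext (congrArg Subtype.val h))

/-- Multiplying the relation by a power of `y` turns it into a polynomial equation. -/
lemma isOfFinOrder_of_sum_zpow_eq_zero {K A ι : Type*} [Field K] [Finite K] [Ring A]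
    [Algebra K A] (s : Finset ι) (l : ι → ℤ) {j : ℤ} (hj : (#{i ∈ s | l i = j} : K) ≠ 0)
    {y : Aˣ} (hy : ∑ i ∈ s, ((y ^ l i : Aˣ) : A) = 0) : IsOfFinOrder y := by
  classical
  obtain ⟨m, hm⟩ := (insert j (s.image l)).bddBelow
  have hmj : m ≤ j := hm (mem_insert_self _ _)
  have hml (i) (hi : i ∈ s) : m ≤ l i := hm (mem_insert_of_mem (mem_image_of_mem l hi))
  let Q : Polynomial K := ∑ i ∈ s, .X ^ (l i - m).toNat
  have hcoeff : Q.coeff (j - m).toNat = #{i ∈ s | l i = j} := by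
    simp only [Q, Polynomial.finsetSum_coeff, Polynomial.coeff_X_pow, sum_boole]
    congr 2
    refine filter_congr fun i hi => ?_
    have := hml i hi
    omega
  have hQ : Q ≠ 0 := fun h => hj (by rw [← hcoeff, h, Polynomial.coeff_zero])
  have hroot : Polynomial.aeval (y : A) Q = 0 := by
    calc Polynomial.aeval (y : A) Q = ∑ i ∈ s, ((y ^ (l i - m) : Aˣ) : A) := by
          simp only [Q, map_sum, map_pow, Polynomial.aeval_X]
          refine sum_congr rfl fun i hi => ?_
          rw [← Units.val_pow_eq_pow_val, ← zpow_natCast, Int.toNat_of_nonneg (by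
            linarith [hml i hi])]
      _ = (∑ i ∈ s, ((y ^ l i : Aˣ) : A)) * ((y ^ (-m) : Aˣ) : A) := by
          simp only [sum_mul, ← Units.val_mul, ← zpow_add, sub_eq_add_neg]
      _ = 0 := by rw [hy, zero_mul]
  exact isOfFinOrder_of_isIntegral (isAlgebraic_iff_isIntegral.1 ⟨Q, hQ, hroot⟩)

lemma exists_dvd_pow_sub_one {A ι : Type*} [CommRing A] {p : ℕ} (hp : p.Prime) (s : Finset ι)
    (l : ι → ℤ) {j : ℤ} (hj : ¬ p ∣ #{i ∈ s | l i = j}) {y : Aˣ}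
    (hy : (p : A) ∣ ∑ i ∈ s, ((y ^ l i : Aˣ) : A)) : ∃ n ≠ 0, (p : A) ∣ (y : A) ^ n - 1 := by
  by_cases hunit : IsUnit (p : A)
  · exact ⟨1, one_ne_zero, hunit.dvd⟩
  have : Fact p.Prime := ⟨hp⟩
  have := CharP.quotient A p hunit
  let := ZMod.algebra (A ⧸ Ideal.span {(p : A)}) p
  let π := Ideal.Quotient.mk (Ideal.span {(p : A)})
  have hπ {a : A} : π a = 0 ↔ (p : A) ∣ a :=
    Ideal.Quotient.eq_zero_iff_mem.trans Ideal.mem_span_singleton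
  have hfin : IsOfFinOrder (Units.map (π : A →* A ⧸ Ideal.span {(p : A)}) y) := by
    refine isOfFinOrder_of_sum_zpow_eq_zero (K := ZMod p) s l (j := j) ?_ ?_
    · rwa [Ne, ZMod.natCast_eq_zero_iff]
    · simpa only [← map_zpow, Units.coe_map, MonoidHom.coe_coe, map_sum] using hπ.2 hy
  obtain ⟨n, hn, hpow⟩ := isOfFinOrder_iff_pow_eq_one.1 hfin
  refine ⟨n, hn.ne', hπ.1 ?_⟩
  rw [map_sub, map_pow, map_one, sub_eq_zero]
  simpa using congrArg Units.val hpow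

end FiniteOrder

section Action

variable {G : Type*} [AddCommGroup G]

/-- The monomial `U^v` of the ring `ℤ[G]` of Laurent polynomials. -/
def mono (v : G) : ℤ[G] := AddMonoidAlgebra.of ℤ G (.ofAdd v)

lemma mono_nsmul (n : ℕ) (v : G) : mono (n • v) = mono v ^ n :=
  map_pow (AddMonoidAlgebra.of ℤ G) _ n

/-- The translation action of `G` on configurations, extended linearly to `ℤ[G]`: the monomial
`U^v` moves the value at `w - v` to `w`. -/
instance : Module ℤ[G] (G → ℤ) :=
  Module.compHom _ (AddMonoidAlgebra.lift ℤ (Module.End ℤ (G → ℤ)) G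
    { toFun := fun v => LinearMap.funLeft ℤ ℤ fun w => w - v.toAdd
      map_one' := by
        ext c w
        simp [LinearMap.funLeft_apply]
      map_mul' := fun u v => by
        ext c w
        simp [LinearMap.funLeft_apply, sub_sub] }).toRingHom

lemma mono_smul_apply (v : G) (c : G → ℤ) (w : G) : (mono v • c) w = c (w - v) := by
  change AddMonoidAlgebra.lift ℤ (Module.End ℤ (G → ℤ)) G _ (mono v) c w = _
  rw [mono, AddMonoidAlgebra.lift_of]
  rfl

lemma mono_smul_one (v : G) : mono v • (1 : G → ℤ) = 1 :=
  funext fun w => mono_smul_apply v 1 w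

lemma mono_sub_one_smul_apply (v : G) (c : G → ℤ) (w : G) :
    ((mono v - 1) • c) w = c (w - v) - c w := by
  rw [sub_smul, one_smul, Pi.sub_apply, mono_smul_apply]

lemma mono_sub_one_smul_eq_zero {v : G} {c : G → ℤ} :
    (mono v - 1) • c = 0 ↔ Function.Periodic c v := by
  refine ⟨fun h w => ?_, fun h => funext fun w => ?_⟩
  · have := congrFun h (w + v)
    rw [mono_sub_one_smul_apply, add_sub_cancel_right, Pi.zero_apply] at this
    linarith
  · rw [mono_sub_one_smul_apply, h.sub_eq, sub_self, Pi.zero_apply]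

/-- A configuration whose values have a common bound. -/
def IsBounded {α : Type*} (c : α → ℤ) : Prop := ∃ B : ℤ, ∀ w, |c w| ≤ B

lemma IsBounded.smul {c : G → ℤ} (hc : IsBounded c) (r : ℤ[G]) : IsBounded (r • c) := by
  induction r using AddMonoidAlgebra.induction_on with
  | of v =>
    obtain ⟨B, hB⟩ := hc
    exact ⟨B, fun w => (mono_smul_apply v c w).symm ▸ hB _⟩
  | add x y hx hy =>
    obtain ⟨B, hB⟩ := hx
    obtain ⟨B', hB'⟩ := hy
    refine ⟨B + B', fun w => ?_⟩
    rw [add_smul]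
    exact (abs_add_le _ _).trans (add_le_add (hB w) (hB' w))
  | smul n x hx =>
    obtain ⟨B, hB⟩ := hx
    refine ⟨|n| * B, fun w => ?_⟩
    rw [smul_assoc, Pi.smul_apply, smul_eq_mul, abs_mul]
    exact mul_le_mul_of_nonneg_left (hB w) (abs_nonneg _)

lemma IsBounded.exists_periodic_of_eq_nsmul {c : G → ℤ} (hc : IsBounded c) :
    ∃ B : ℕ, ∀ m > B, ∀ (v : G) (d : G → ℤ), (mono v - 1) • c = m • d →
      Function.Periodic c v := by
  obtain ⟨B, hB⟩ := hc
  refine ⟨(B + B).toNat, fun m hm v d h => ?_⟩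
  rw [← mono_sub_one_smul_eq_zero]
  funext w
  have hle : |((mono v - 1) • c) w| ≤ B + B := by
    rw [mono_sub_one_smul_apply]
    exact (abs_sub _ _).trans (add_le_add (hB _) (hB _))
  refine Int.eq_zero_of_abs_lt_dvd (m := m) ⟨d w, ?_⟩ (by omega)
  rw [h, Pi.smul_apply, nsmul_eq_mul]

/-- Modulo `(U^v - 1)²`, the binomial `U^{mv} - 1` is `m (U^v - 1)`. -/
lemma IsBounded.periodic_of_sq_smul_eq_zero {c : G → ℤ} (hc : IsBounded c) {v : G}
    (h : (mono v - 1) ^ 2 • c = 0) : Function.Periodic c v := by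
  obtain ⟨B, hB⟩ := hc.exists_periodic_of_eq_nsmul
  obtain ⟨r, hr⟩ := Polynomial.powAddExpansion 1 (mono v - 1) (B + 1)
  have hmul : (mono ((B + 1) • v) - 1) • c = (B + 1) • (mono v - 1) • c := by
    have hring : mono ((B + 1) • v) - 1
        = ((B + 1 : ℕ) : ℤ[G]) * (mono v - 1) + r * (mono v - 1) ^ 2 := by
      rw [add_sub_cancel, one_pow, one_pow, mul_one] at hr
      rw [mono_nsmul, hr]
      ring
    rw [hring, add_smul, mul_smul, mul_smul, h, smul_zero, add_zero, Nat.cast_smul_eq_nsmul]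
  have hzero := mono_sub_one_smul_eq_zero.2 (hB (B + 1) B.lt_succ_self _ _ hmul)
  rw [hmul] at hzero
  exact mono_sub_one_smul_eq_zero.1 ((smul_eq_zero.1 hzero).resolve_left B.succ_ne_zero)

end Action

section Dilation

variable {G : Type*} [AddCommGroup G] {F : Finset G} {c : G → ℤ} {p n : ℕ}

/-- The polynomial `f(U^n) = ∑_{v ∈ F} U^{nv}` of the cluster `F` dilated by `n`; the tiling
equation of `F` for a configuration `c` is `dil F 1 • c = 1`. -/
def dil (F : Finset G) (n : ℕ) : ℤ[G] := ∑ v ∈ F, mono (n • v)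

lemma dil_smul_apply (F : Finset G) (n : ℕ) (c : G → ℤ) (w : G) :
    (dil F n • c) w = ∑ v ∈ F, c (w - n • v) := by
  simp only [dil, sum_smul, Finset.sum_apply, mono_smul_apply]

lemma dil_smul_one (F : Finset G) (n : ℕ) : dil F n • (1 : G → ℤ) = #F • (1 : G → ℤ) := by
  simp only [dil, sum_smul, mono_smul_one, sum_const]

lemma dil_pow_smul_one (F : Finset G) (n k : ℕ) :
    dil F n ^ k • (1 : G → ℤ) = (#F ^ k : ℕ) • (1 : G → ℤ) := by
  induction k with
  | zero => simp
  | succ k ih => rw [pow_succ, mul_smul, dil_smul_one, smul_comm, ih, smul_smul, pow_succ']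

lemma dvd_dil_pow_sub_dil (hp : p.Prime) (F : Finset G) (n k : ℕ) :
    (p : ℤ[G]) ∣ dil F n ^ p ^ k - dil F (p ^ k * n) := by
  simpa only [dil, ← mono_nsmul, smul_smul] using
    dvd_sum_pow_prime_pow_sub_sum_pow hp F (fun v => mono (n • v)) k

lemma eq_zero_of_dil_smul_eq_zero (hF : F.Nonempty) (hc : 0 ≤ c) (h : dil F n • c = 0) :
    c = 0 := by
  obtain ⟨v, hv⟩ := hF
  funext w
  have hsum := congrFun h (w + n • v)
  rw [dil_smul_apply, Pi.zero_apply] at hsum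
  simpa using (sum_eq_zero_iff_of_nonneg fun u _ => hc (w + n • v - n • u)).1 hsum v hv

/-- By Frobenius `f(U^{pn}) c ≡ |F|^{p - 1}` modulo `p`, so the nonnegative configuration
`f(U^{pn}) c` has no zero. -/
lemma one_le_dil_prime_mul_smul (hp : p.Prime) (hpF : (#F).Coprime p) (hc : 0 ≤ c)
    (hn : dil F n • c = 1) : 1 ≤ dil F (p * n) • c := by
  intro w
  have hnonneg : 0 ≤ (dil F (p * n) • c) w := by
    rw [dil_smul_apply]
    exact sum_nonneg fun v _ => hc _
  refine Int.add_one_le_of_lt (hnonneg.lt_of_ne' fun hzero => ?_)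
  obtain ⟨r, hr⟩ := dvd_dil_pow_sub_dil hp F n 1
  rw [pow_one] at hr
  have hpow : dil F n ^ p • c = (#F ^ (p - 1) : ℕ) • (1 : G → ℤ) := by
    rw [← Nat.sub_add_cancel hp.one_le, pow_succ, mul_smul, hn, dil_pow_smul_one,
      Nat.add_sub_cancel]
  have hval := congrFun (congrArg (· • c) hr) w
  simp only [sub_smul, hpow, mul_smul, Nat.cast_smul_eq_nsmul, Pi.sub_apply, Pi.smul_apply,
    hzero, Pi.one_apply, sub_zero] at hval
  rw [nsmul_eq_mul, nsmul_eq_mul, mul_one] at hval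
  have hdvd : p ∣ #F ^ (p - 1) := by exact_mod_cast Dvd.intro _ hval.symm
  exact hp.coprime_iff_not_dvd.1 hpF.symm (hp.dvd_of_dvd_pow hdvd)

theorem dil_smul_eq_one (hc : 0 ≤ c) (h : dil F 1 • c = 1) (hn : (#F).Coprime n)
    (hn0 : n ≠ 0) : dil F n • c = 1 := by
  induction n using induction_on_primes with
  | zero => exact absurd rfl hn0
  | one => exact h
  | prime_mul q n hq ih =>
    have hF : F.Nonempty := by
      rw [nonempty_iff_ne_empty]
      rintro rfl
      simpa [dil] using congrFun h 0
    have hprev := ih hn.coprime_mul_left_right (right_ne_zero_of_mul hn0)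
    have hle := one_le_dil_prime_mul_smul hq hn.coprime_mul_right_right hc hprev
    refine sub_eq_zero.1 (eq_zero_of_dil_smul_eq_zero (n := 1) hF (sub_nonneg.2 hle) ?_)
    rw [smul_sub, smul_comm, h, dil_smul_one, dil_smul_one, sub_self]

end Dilation

section Recurrence

variable {G : Type*} [AddCommGroup G] {F : Finset G} {c : G → ℤ} {p : ℕ}

/-- The group of monomials, as units of the quotient of `ℤ[G]` by the annihilator of `c`. -/
def monoUnit (c : G → ℤ) : Multiplicative G →* (ℤ[G] ⧸ Ideal.torsionOf ℤ[G] (G → ℤ) c)ˣ :=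
  MonoidHom.toHomUnits
    ((Ideal.Quotient.mk (Ideal.torsionOf ℤ[G] (G → ℤ) c) : _ →* _).comp (AddMonoidAlgebra.of ℤ G))

lemma val_monoUnit (c : G → ℤ) (v : G) :
    (monoUnit c (.ofAdd v)).val = Ideal.Quotient.mk _ (mono v) := rfl

lemma mk_torsionOf_eq_mk {c : G → ℤ} {r s : ℤ[G]} :
    Ideal.Quotient.mk (Ideal.torsionOf ℤ[G] (G → ℤ) c) r = Ideal.Quotient.mk _ s ↔
      r • c = s • c := by
  rw [Ideal.Quotient.eq, Ideal.mem_torsionOf_iff, sub_smul, sub_eq_zero]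

lemma monoUnit_eq_one {c : G → ℤ} {v : G} :
    monoUnit c (.ofAdd v) = 1 ↔ Function.Periodic c v := by
  rw [Units.ext_iff, val_monoUnit, Units.val_one, ← map_one (Ideal.Quotient.mk _),
    mk_torsionOf_eq_mk, ← mono_sub_one_smul_eq_zero, sub_smul, sub_eq_zero]

lemma dvd_mk_dil (hp : p.Prime) {n : ℕ} (h : dil F n • c = 0) (a : ℕ) :
    (p : ℤ[G] ⧸ Ideal.torsionOf ℤ[G] (G → ℤ) c) ∣ Ideal.Quotient.mk _ (dil F (p ^ a * n)) := by
  have hzero : Ideal.Quotient.mk (Ideal.torsionOf ℤ[G] (G → ℤ) c) (dil F n) = 0 :=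
    Ideal.Quotient.eq_zero_iff_mem.2 h
  have hdvd := map_dvd (Ideal.Quotient.mk (Ideal.torsionOf ℤ[G] (G → ℤ) c))
    (dvd_sub_comm.1 (dvd_dil_pow_sub_dil hp F n a))
  rwa [map_natCast, map_sub, map_pow, hzero, zero_pow (pow_ne_zero a hp.ne_zero),
    sub_zero] at hdvd

lemma mk_dil_eq_sum_zpow {D : ℕ} {t : G} {l : G → ℤ}
    (hl : ∀ v ∈ F, Function.Periodic c (D • v - l v • t)) :
    Ideal.Quotient.mk (Ideal.torsionOf ℤ[G] (G → ℤ) c) (dil F D)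
      = ∑ v ∈ F, (monoUnit c (.ofAdd t) ^ l v).val := by
  rw [dil, map_sum]
  refine sum_congr rfl fun v hv => ?_
  have hunit := monoUnit_eq_one.2 (hl v hv)
  rw [ofAdd_sub, map_div, div_eq_one, ofAdd_zsmul, map_zpow] at hunit
  rw [← hunit, val_monoUnit]

/-- Modulo `p`, the equation `f(U^D) c = 0` is a linear recurrence for `c` in the direction `t`,
so `p` divides some `U^{Mt} - 1` up to the annihilator of `c`. Hence `p^{k+1}` divides
`U^{p^k M t} - 1`, which forces a period as `c` is bounded. -/
lemma IsBounded.exists_periodic_nsmul (hp : p.Prime) (hc : IsBounded c)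
    (hdil : ∀ n, p.Coprime n → dil F n • c = 0) {D : ℕ} (hD : D ≠ 0) {t : G} {l : G → ℤ}
    (hl : ∀ v ∈ F, Function.Periodic c (D • v - l v • t)) {j : ℤ}
    (hj : ¬ p ∣ #{v ∈ F | l v = j}) : ∃ N ≠ 0, Function.Periodic c (N • t) := by
  obtain ⟨a, n, hn, rfl⟩ := Nat.exists_eq_pow_mul_and_not_dvd hD p hp.ne_one
  have hdvd := dvd_mk_dil hp (hdil n (hp.coprime_iff_not_dvd.2 hn)) a
  rw [mk_dil_eq_sum_zpow hl] at hdvd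
  obtain ⟨M, hM, hdvdM⟩ := exists_dvd_pow_sub_one hp F l hj hdvd
  obtain ⟨B, hB⟩ := hc.exists_periodic_of_eq_nsmul
  obtain ⟨y, hy⟩ := dvd_sub_pow_of_dvd_sub hdvdM B
  obtain ⟨r, rfl⟩ := Ideal.Quotient.mk_surjective y
  have hBp : B < p ^ (B + 1) := B.lt_succ_self.trans (Nat.lt_pow_self hp.one_lt)
  refine ⟨M * p ^ B, mul_ne_zero hM (pow_ne_zero B hp.ne_zero), hB _ hBp _ (r • c) ?_⟩
  rw [val_monoUnit, one_pow, ← pow_mul, ← map_pow, ← mono_nsmul, ← map_one (Ideal.Quotient.mk _),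
    ← map_sub, ← map_natCast (Ideal.Quotient.mk _), ← map_pow, ← map_mul, mk_torsionOf_eq_mk] at hy
  rw [hy, mul_smul, ← Nat.cast_pow, Nat.cast_smul_eq_nsmul]

end Recurrence

section Binomials

variable {G : Type*} [AddCommGroup G] {F : Finset G} {c : G → ℤ} {s t : G} {S : Multiset G}

/-- The product of the binomials `U^s - 1` over `s ∈ S`. -/
def binProd (S : Multiset G) : ℤ[G] := (S.map fun s => mono s - 1).prod

lemma binProd_cons (s : G) (S : Multiset G) : binProd (s ::ₘ S) = (mono s - 1) * binProd S := by
  rw [binProd, Multiset.map_cons, Multiset.prod_cons, binProd]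

lemma binProd_smul_one (hS : S ≠ 0) : binProd S • (1 : G → ℤ) = 0 := by
  obtain ⟨s, hs⟩ := Multiset.exists_mem_of_ne_zero hS
  obtain ⟨S, rfl⟩ := Multiset.exists_cons_of_mem hs
  rw [binProd_cons, mul_comm, mul_smul, sub_smul, one_smul, mono_smul_one, sub_self, smul_zero]

/-- The product of the binomials `U^s - 1` over `s ∈ S`, none of them zero, annihilates `c`. The
multiset of exponents stands for the product. -/
def IsBinomialAnnihilator (c : G → ℤ) (S : Multiset G) : Prop :=
  0 ∉ S ∧ binProd S • c = 0

/-- Normalized at `v₀ ∈ F`, the equations for the dilations `1 + km` have the form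
`(c - 1) + ∑_v (U^{m(v - v₀)})^k U^{v - v₀} c = 0`, and all terms of the sum can be eliminated. -/
lemma exists_isBinomialAnnihilator [IsAddTorsionFree G] (hF : F.Nontrivial) {m : ℕ} (hm : m ≠ 0)
    (h : ∀ k : ℕ, dil F (1 + k * m) • c = 1) : ∃ S, IsBinomialAnnihilator c S := by
  classical
  obtain ⟨v₀, hv₀⟩ := hF.nonempty
  let S := (F.erase v₀).val.map fun v => m • (v - v₀)
  have hS : S ≠ 0 := by
    rw [Ne, Multiset.map_eq_zero, val_eq_zero]
    exact hF.erase_nonempty.ne_empty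
  have hsum (k : ℕ) :
      c - 1 + ∑ v ∈ F.erase v₀, mono (m • (v - v₀)) ^ k • mono (v - v₀) • c = 0 := by
    funext w
    have hw := congrFun (h k) (w + (1 + k * m) • v₀)
    rw [dil_smul_apply, ← add_sum_erase F _ hv₀, add_sub_cancel_right] at hw
    have hterm (v : G) : (mono (m • (v - v₀)) ^ k • mono (v - v₀) • c) w
        = c (w + (1 + k * m) • v₀ - (1 + k * m) • v) := by
      rw [← mono_nsmul, mono_smul_apply, mono_smul_apply]
      congr 1
      module
    simp only [Pi.add_apply, Pi.sub_apply, Finset.sum_apply, hterm, Pi.zero_apply]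
    linear_combination hw
  refine ⟨S, fun h0 => ?_, ?_⟩
  · obtain ⟨v, hv, hv0⟩ := Multiset.mem_map.1 h0
    exact (mem_erase.1 hv).1 (sub_eq_zero.1 ((smul_eq_zero.1 hv0).resolve_left hm))
  · have hprod : binProd S = ∏ v ∈ F.erase v₀, (mono (m • (v - v₀)) - 1) := by
      rw [binProd, Multiset.map_map]
      rfl
    have hzero := prod_sub_one_smul_eq_zero _ _ _ _ hsum
    rwa [← hprod, smul_sub, binProd_smul_one hS, sub_zero] at hzero

lemma IsBinomialAnnihilator.periodic (h : IsBinomialAnnihilator c (s ::ₘ S)) :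
    Function.Periodic (binProd S • c) s := by
  rw [← mono_sub_one_smul_eq_zero, ← mul_smul, ← binProd_cons]
  exact h.2

/-- A binomial annihilator of `c` with the least number of factors. -/
def IsMinAnn (c : G → ℤ) (S : Multiset G) : Prop :=
  MinimalFor (IsBinomialAnnihilator c) Multiset.card S

lemma IsMinAnn.not_periodic_zsmul [IsAddTorsionFree G] (hc : IsBounded c)
    (h : IsMinAnn c (s ::ₘ t ::ₘ S)) {N : ℤ} (hN : N ≠ 0) :
    ¬ Function.Periodic (binProd (t ::ₘ S) • c) (N • t) := by
  intro hper
  obtain ⟨h0, -⟩ := h.1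
  have hper' : Function.Periodic ((mono (N • t) - 1) • binProd S • c) t := by
    rw [← mono_sub_one_smul_eq_zero] at hper ⊢
    rwa [smul_comm, ← mul_smul (mono t - 1), ← binProd_cons]
  have hsq : (mono (N • t) - 1) ^ 2 • binProd S • c = 0 := by
    rw [sq, mul_smul]
    exact mono_sub_one_smul_eq_zero.2 (hper'.zsmul N)
  have hann : IsBinomialAnnihilator c (N • t ::ₘ S) := by
    refine ⟨?_, ?_⟩
    · simp only [Multiset.mem_cons, not_or, eq_comm (a := (0 : G)), smul_eq_zero] at h0 ⊢
      exact ⟨⟨hN, h0.2.1⟩, h0.2.2⟩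
    · rw [binProd_cons, mul_smul]
      exact mono_sub_one_smul_eq_zero.2 ((hc.smul _).periodic_of_sq_smul_eq_zero hsq)
  have hle := h.2 hann (by simp)
  simp at hle

end Binomials

section LevelSets

variable {α β γ : Type*} [DecidableEq β] [DecidableEq γ] {S : Finset α} {p q : ℕ}

lemma card_image_le_of_dvd_card_filter (hp : 0 < p) (hcard : #S = p * q) {f : α → β}
    (hf : ∀ b, p ∣ #{x ∈ S | f x = b}) : #(S.image f) ≤ q := by
  refine Nat.le_of_mul_le_mul_left ?_ hp
  rw [← hcard]
  refine mul_card_image_le_card S p fun b hb => ?_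
  obtain ⟨x, hx, rfl⟩ := mem_image.1 hb
  exact Nat.le_of_dvd (card_pos.2 ⟨x, mem_filter.2 ⟨hx, rfl⟩⟩) (hf _)

/-- The images have at most `q` and `p` elements, so the `pq` pairs of values fill their product. -/
lemma exists_mem_eq_and_eq_of_dvd_card_filter (hp : 0 < p) (hq : 0 < q)
    (hcard : #S = p * q) {f : α → β} {g : α → γ}
    (hinj : Set.InjOn (fun x => (f x, g x)) S) (hf : ∀ b, p ∣ #{x ∈ S | f x = b})
    (hg : ∀ b, q ∣ #{x ∈ S | g x = b}) {x y : α} (hx : x ∈ S) (hy : y ∈ S) :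
    ∃ v ∈ S, f v = f x ∧ g v = g y := by
  have hsub : S.image (fun x => (f x, g x)) ⊆ S.image f ×ˢ S.image g := by
    refine image_subset_iff.2 fun z hz => ?_
    exact mk_mem_product (mem_image_of_mem f hz) (mem_image_of_mem g hz)
  have hle : #(S.image f ×ˢ S.image g) ≤ #(S.image fun x => (f x, g x)) := by
    rw [card_product, card_image_of_injOn hinj, hcard, mul_comm p q]
    exact Nat.mul_le_mul (card_image_le_of_dvd_card_filter hp hcard hf)
      (card_image_le_of_dvd_card_filter hq (hcard.trans (mul_comm p q)) hg)
  have hmem := mk_mem_product (mem_image_of_mem f hx) (mem_image_of_mem g hy)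
  rw [← eq_of_subset_of_card_le hsub hle, mem_image] at hmem
  simpa only [Prod.mk.injEq] using hmem

/-- The level set is that of the point of the grid maximizing both `b * f` and `c * g`. -/
lemma exists_card_filter_eq_one {R : Type*} [CommRing R] [LinearOrder R] [IsStrictOrderedRing R]
    (hp : 0 < p) (hq : 0 < q) (hcard : #S = p * q) {f g h : α → R}
    (hinj : Set.InjOn (fun x => (f x, g x)) S) (hf : ∀ b, p ∣ #{x ∈ S | f x = b})
    (hg : ∀ b, q ∣ #{x ∈ S | g x = b}) {a b c : R} (hb : b ≠ 0) (hc : c ≠ 0)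
    (hfgh : ∀ x, a * h x = b * f x + c * g x) : ∃ j, #{x ∈ S | h x = j} = 1 := by
  have hS : S.Nonempty := card_pos.1 (hcard ▸ Nat.mul_pos hp hq)
  obtain ⟨x, hx, hmaxf⟩ := S.exists_max_image (fun x => b * f x) hS
  obtain ⟨y, hy, hmaxg⟩ := S.exists_max_image (fun x => c * g x) hS
  obtain ⟨v, hv, hvf, hvg⟩ :=
    exists_mem_eq_and_eq_of_dvd_card_filter hp hq hcard hinj hf hg hx hy
  refine ⟨h v, card_eq_one.2 ⟨v, eq_singleton_iff_unique_mem.2 ⟨mem_filter.2 ⟨hv, rfl⟩, ?_⟩⟩⟩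
  intro w hw
  obtain ⟨hw, hwv⟩ := mem_filter.1 hw
  have hsum := hfgh w
  rw [hwv, hfgh v, hvf, hvg] at hsum
  have hwf := mul_left_cancel₀ hb (show b * f w = b * f x by linarith [hmaxf w hw, hmaxg w hw])
  have hwg := mul_left_cancel₀ hc (show c * g w = c * g y by linarith [hmaxf w hw, hmaxg w hw])
  exact hinj hw hv (Prod.ext (hwf.trans hvf.symm) (hwg.trans hvg.symm))

end LevelSets

section Plane

variable {F : Finset (ℤ × ℤ)} {c : ℤ × ℤ → ℤ} {p : ℕ} {s t u : ℤ × ℤ} {S : Multiset (ℤ × ℤ)}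

/-- The determinant of two vectors; the level sets of `det2 s` are the lines with direction `s`. -/
def det2 (s v : ℤ × ℤ) : ℤ := s.1 * v.2 - s.2 * v.1

lemma det2_smul_eq (s t v : ℤ × ℤ) : det2 s t • v = det2 v t • s + det2 s v • t := by
  ext <;> simp only [det2, Prod.smul_fst, Prod.smul_snd, Prod.fst_add, Prod.snd_add, smul_eq_mul]
    <;> ring

lemma exists_linIndep (hs : s ≠ 0) : ∃ t, LinIndep s t := by
  by_contra! h
  have h1 := h (1, 0)
  have h2 := h (0, 1)
  simp only [LinIndep, not_not] at h1 h2
  exact hs (Prod.ext (by simpa using h2) (by simpa using h1))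

lemma exists_zsmul_eq_zsmul (hs : s ≠ 0) (h : ¬ LinIndep s t) :
    ∃ N : ℤ, N ≠ 0 ∧ ∃ M : ℤ, N • t = M • s := by
  obtain ⟨v, hv⟩ := exists_linIndep hs
  have hst : det2 s t = 0 := not_not.1 h
  refine ⟨det2 s v, hv, det2 t v, ?_⟩
  rw [det2_smul_eq, hst, zero_smul, add_zero]

lemma IsMinAnn.linIndep (hc : IsBounded c) (h : IsMinAnn c (s ::ₘ t ::ₘ S)) : LinIndep s t := by
  by_contra hst
  have hs : s ≠ 0 := fun hs => h.1.1 (hs ▸ Multiset.mem_cons_self _ _)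
  obtain ⟨N, hN, M, hNM⟩ := exists_zsmul_eq_zsmul hs hst
  exact h.not_periodic_zsmul hc hN (hNM ▸ h.1.periodic.zsmul M)

lemma IsMinAnn.dvd_card_filter (hp : p.Prime) (hc : IsBounded c)
    (hdil : ∀ n, p.Coprime n → dil F n • c = 1) (h : IsMinAnn c (s ::ₘ t ::ₘ S)) (j : ℤ) :
    p ∣ #{v ∈ F | det2 s v = j} := by
  by_contra hj
  have hdil' (n : ℕ) (hn : p.Coprime n) : dil F n • binProd (t ::ₘ S) • c = 0 := by
    rw [smul_comm, hdil n hn, binProd_smul_one (Multiset.cons_ne_zero)]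
  have hst : det2 s t ≠ 0 := h.linIndep hc
  have hline (v : ℤ × ℤ) : Function.Periodic (binProd (t ::ₘ S) • c)
      ((det2 s t).natAbs • v - det2 s v • (det2 s t).sign • t) := by
    have hv : (det2 s t).natAbs • v - det2 s v • (det2 s t).sign • t
        = ((det2 s t).sign * det2 v t) • s := by
      rw [← natCast_zsmul, ← Int.sign_mul_self_eq_natAbs, mul_smul, det2_smul_eq]
      module
    exact hv ▸ h.1.periodic.zsmul _
  obtain ⟨N, hN, hper⟩ := (hc.smul (binProd (t ::ₘ S))).exists_periodic_nsmul hp hdil'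
    (Int.natAbs_ne_zero.2 hst) (fun v _ => hline v) hj
  rw [← natCast_zsmul, smul_smul] at hper
  exact h.not_periodic_zsmul hc
    (mul_ne_zero (Nat.cast_ne_zero.2 hN) (Int.sign_eq_zero_iff_zero.not.2 hst)) hper

lemma injective_det2_prodMk (h : LinIndep s t) :
    Function.Injective fun v => (det2 s v, det2 t v) := by
  intro v w hvw
  obtain ⟨hs, ht⟩ := Prod.mk.inj hvw
  have ht' : det2 v t = det2 w t := by
    simp only [det2] at ht ⊢
    linarith
  refine smul_right_injective (ℤ × ℤ) (r := det2 s t) h ?_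
  change det2 s t • v = det2 s t • w
  rw [det2_smul_eq s t v, det2_smul_eq s t w, hs, ht']

lemma not_isMinAnn_cons_cons_cons (hp : p.Prime) (hF : #F = p ^ 2) (hc : IsBounded c)
    (hdil : ∀ n, p.Coprime n → dil F n • c = 1) (s t u : ℤ × ℤ) (S : Multiset (ℤ × ℤ)) :
    ¬ IsMinAnn c (s ::ₘ t ::ₘ u ::ₘ S) := by
  intro h
  have ht : IsMinAnn c (t ::ₘ s ::ₘ u ::ₘ S) := Multiset.cons_swap s t _ ▸ h
  have hsu : IsMinAnn c (s ::ₘ u ::ₘ t ::ₘ S) := Multiset.cons_swap t u S ▸ h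
  have hu : IsMinAnn c (u ::ₘ s ::ₘ t ::ₘ S) := Multiset.cons_swap s u _ ▸ hsu
  have hut : IsMinAnn c (u ::ₘ t ::ₘ s ::ₘ S) := Multiset.cons_swap s t S ▸ hu
  have hcombi (v : ℤ × ℤ) :
      det2 s t * det2 u v = det2 u t * det2 s v + det2 s u * det2 t v := by
    simp only [det2]
    ring
  obtain ⟨j, hj⟩ := exists_card_filter_eq_one hp.pos hp.pos (hF.trans (sq p))
    (injective_det2_prodMk (h.linIndep hc)).injOn (h.dvd_card_filter hp hc hdil)
    (ht.dvd_card_filter hp hc hdil) (hut.linIndep hc) (hsu.linIndep hc) hcombi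
  exact hp.one_lt.ne' (Nat.dvd_one.1 (hj ▸ hu.dvd_card_filter hp hc hdil j))

lemma exists_linIndep_smul_eq_zero (hp : p.Prime) (hF : #F = p ^ 2) (hc : IsBounded c)
    (hdil : ∀ n, p.Coprime n → dil F n • c = 1) :
    ∃ u v, LinIndep u v ∧ (mono u - 1) • (mono v - 1) • c = 0 := by
  have hF' : F.Nontrivial :=
    one_lt_card_iff_nontrivial.1 (hF ▸ Nat.one_lt_pow two_ne_zero hp.one_lt)
  obtain ⟨S, hS⟩ := exists_minimalFor_of_wellFoundedLT _ Multiset.card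
    (exists_isBinomialAnnihilator hF' hp.ne_zero fun k => hdil (1 + k * p) (by simp))
  obtain ⟨h0, hzero⟩ := hS.1
  induction S using Quotient.inductionOn with | h l
  match l with
  | [] =>
    have hc0 : c = 0 := by simpa [binProd] using hzero
    exact ⟨(1, 0), (0, 1), by simp [LinIndep], by rw [hc0, smul_zero, smul_zero]⟩
  | [s] =>
    obtain ⟨t, hst⟩ := exists_linIndep (s := s) (by rintro rfl; simp at h0)
    refine ⟨s, t, hst, ?_⟩
    have hs : (mono s - 1) • c = 0 := by simpa [binProd] using hzero
    rw [smul_comm, hs, smul_zero]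
  | [s, t] =>
    refine ⟨s, t, IsMinAnn.linIndep (S := 0) hc hS, ?_⟩
    simpa [binProd, mul_smul] using hzero
  | s :: t :: u :: l => exact absurd hS (not_isMinAnn_cons_cons_cons hp hF hc hdil s t u l)

end Plane

section Tiling

variable {F : Finset (ℤ × ℤ)} {T : Set (ℤ × ℤ)}

lemma dil_one_smul_indicator (hT : IsTiling F T) :
    dil F 1 • T.indicator (1 : ℤ × ℤ → ℤ) = 1 := by
  funext w
  obtain ⟨⟨t, v⟩, ⟨ht, hv, hw⟩, huniq⟩ := hT w
  have hvt : w - v = t := sub_eq_of_eq_add hw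
  simp only [dil_smul_apply, one_smul]
  rw [sum_eq_single_of_mem v hv, hvt, Set.indicator_of_mem ht, Pi.one_apply, Pi.one_apply]
  intro u hu huv
  refine Set.indicator_of_notMem (fun hmem => huv ?_) _
  exact congrArg Prod.snd (huniq (w - u, u) ⟨hmem, hu, (sub_add_cancel w u).symm⟩)

end Tiling

end ClusterTiling

open ClusterTiling in
theorem stmt14_general {R : Type*} [AddGroupWithOne R] {p : ℕ} (hp : p.Prime)
    {F : Finset (ℤ × ℤ)} (hcard : #F = p ^ 2) {T : Set (ℤ × ℤ)} (hT : IsTiling F T)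
    {x : ℤ × ℤ → R} (hx : x = T.indicator fun _ => 1) :
    ∃ u v : ℤ × ℤ, LinIndep u v ∧
      ∀ w : ℤ × ℤ, x w - x (w - u) - x (w - v) + x (w - u - v) = 0 := by
  let c : ℤ × ℤ → ℤ := T.indicator 1
  have hc : 0 ≤ c := Set.indicator_nonneg fun _ _ => zero_le_one
  have hbdd : IsBounded c := ⟨1, fun w => by by_cases hw : w ∈ T <;> simp [c, hw]⟩
  have hdil (n : ℕ) (hn : p.Coprime n) : dil F n • c = 1 := by
    refine dil_smul_eq_one hc (dil_one_smul_indicator hT) (hcard ▸ hn.pow_left 2) ?_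
    rintro rfl
    exact hp.ne_one ((Nat.coprime_zero_right p).1 hn)
  obtain ⟨u, v, huv, hzero⟩ := exists_linIndep_smul_eq_zero hp hcard hbdd hdil
  refine ⟨u, v, huv, fun w => ?_⟩
  have hcx (w : ℤ × ℤ) : x w = (c w : R) := by by_cases hw : w ∈ T <;> simp [hx, c, hw]
  have hw := congrFun hzero w
  simp only [mono_sub_one_smul_apply, Pi.zero_apply] at hw
  have hint : c w - c (w - u) - c (w - v) + c (w - u - v) = 0 := by linarith
  simp only [hcx]
  exact_mod_cast congrArg (Int.cast : ℤ → R) hint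

/-- If `p` is prime, `F ⊆ ℤ²` is a cluster of cardinality `p²` and `T`
is an `F`-tiling, then the orbit closure of `1_T` contains a point annihilated by
`(U^u − 1)(U^v − 1)` for some linearly independent `u, v ∈ ℤ²` (hence of order at
most `2`). -/
theorem stmt14 (p : ℕ) (hp : p.Prime) (F : Finset (ℤ × ℤ)) (hF : F.Nonempty)
    (hcard : F.card = p ^ 2) (T : Set (ℤ × ℤ)) (hT : IsTiling F T) :
    ∃ x ∈ orbitClosure (T.indicator fun _ => (1 : ℂ)),
      ∃ u v : ℤ × ℤ, LinIndep u v ∧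
        ∀ w : ℤ × ℤ, x w - x (w - u) - x (w - v) + x (w - u - v) = 0 := by
  refine ⟨_, subset_closure ⟨0, funext fun w => ?_⟩, stmt14_general hp hcard hT rfl⟩
  rw [shift, sub_zero]
end
end
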